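/- With the apparatus fixed and p sufficiently large in terms of k, suppose that a and b are integers with 0 ≤ a < b ≤ θ^{−1} and b ≥ (k−t−1)a. Then there exists a constant C depending at most on s, k, r, t, N such that K_{a,b}(X) ≤ C·M^{μb+νa}·(M^{tb−a})^r·J_{s+r,k}(X/M^b)^{1−1/t}·I_{b,tb}(X)^{1/t}, where μ = (1/2)(t+r−k)(t+r−k−1) and ν = (1/2)(t+r−k)(k+r−t−1). -/

import Mathlib

open Filter MeasureTheory Finset

attribute [local instance] Classical.propDecidable

noncomputable section

/-- Number of integral solutions of the Vinogradov system of degree k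
in 2s variables from [1,X]. -/
def Jcount (s k : ℕ) (X : ℝ) : ℕ :=
  Set.ncard {xy : (Fin s → ℤ) × (Fin s → ℤ) |
    (∀ i, 1 ≤ xy.1 i ∧ (xy.1 i : ℝ) ≤ X) ∧
    (∀ i, 1 ≤ xy.2 i ∧ (xy.2 i : ℝ) ≤ X) ∧
    ∀ j ∈ Finset.Icc 1 k, ∑ i, ((xy.1 i) ^ j - (xy.2 i) ^ j) = 0}

/-- e(z) = exp(2πiz). -/
def ec (z : ℝ) : ℂ := Complex.exp (2 * Real.pi * Complex.I * z)

/-- The unit box [0,1)^k. -/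
def box (k : ℕ) : Set (Fin k → ℝ) := Set.univ.pi fun _ => Set.Ico (0:ℝ) 1

/-- The exponential sum f_c(α;ξ), over 1 ≤ x ≤ X with x ≡ ξ (mod p^c). -/
def fexp (k p : ℕ) (X : ℝ) (c : ℕ) (ξ : ℤ) (α : Fin k → ℝ) : ℂ :=
  ∑ x ∈ (Finset.Icc (1:ℤ) ⌊X⌋).filter (fun x => Int.ModEq ((p:ℤ)^c) x ξ),
    ec (∑ j : Fin k, α j * (x:ℝ)^((j:ℕ)+1))

/-- The set Ξ_c^r(ξ): r-tuples in [1,p^{c+1}], congruent to ξ mod p^c,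
pairwise distinct mod p^{c+1}. -/
def XiSet (p r c : ℕ) (ξ : ℤ) : Set (Fin r → ℤ) :=
  {v | (∀ i, 1 ≤ v i ∧ v i ≤ (p:ℤ)^(c+1)) ∧
       (∀ i, Int.ModEq ((p:ℤ)^c) (v i) ξ) ∧
       Function.Injective fun i => ((v i : ZMod (p^(c+1))))}

/-- The conditioned exponential sum F_c(α;ξ). -/
def Fexp (k p r : ℕ) (X : ℝ) (c : ℕ) (ξ : ℤ) (α : Fin k → ℝ) : ℂ :=
  ∑ᶠ v ∈ XiSet p r c ξ, ∏ i, fexp k p X (c+1) (v i) α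

/-- The mean value I_{a,b}(X;ξ,η). -/
def Iab (k p r s : ℕ) (X : ℝ) (a b : ℕ) (ξ η : ℤ) : ℝ :=
  ∫ α in box k, ‖Fexp k p r X a ξ α‖^2 * ‖fexp k p X b η α‖^(2*s)

/-- The mean value K_{a,b}(X;ξ,η). -/
def Kab (k p r t : ℕ) (X : ℝ) (a b : ℕ) (ξ η : ℤ) : ℝ :=
  ∫ α in box k, ‖Fexp k p r X a ξ α‖^2 * ‖Fexp k p r X b η α‖^(2*t)

/-- I_{a,b}(X): the maximum of I_{a,b}(X;ξ,η) over admissible ξ, η. -/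
def Imax (k p r s : ℕ) (X : ℝ) (a b : ℕ) : ℝ :=
  sSup {v : ℝ | ∃ ξ η : ℤ, 1 ≤ ξ ∧ ξ ≤ (p:ℤ)^a ∧ 1 ≤ η ∧ η ≤ (p:ℤ)^b ∧
    ¬ Int.ModEq (p:ℤ) η ξ ∧ v = Iab k p r s X a b ξ η}

/-- The set Ξ(η) of members of Ξ_0^r(0) avoiding the class of η mod p. -/
def XiTilde (p r : ℕ) (η : ℤ) : Set (Fin r → ℤ) :=
  {v | v ∈ XiSet p r 0 0 ∧ ∀ i, ¬ Int.ModEq (p:ℤ) (v i) η}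

/-- The pre-conditioned sum F(α;η). -/
def Ftilde (k p r : ℕ) (X : ℝ) (η : ℤ) (α : Fin k → ℝ) : ℂ :=
  ∑ᶠ v ∈ XiTilde p r η, ∏ i, fexp k p X 1 (v i) α

/-- The mean value K̃_c(X;η). -/
def Ktilde (k p r t : ℕ) (X : ℝ) (c : ℕ) (η : ℤ) : ℝ :=
  ∫ α in box k, ‖Ftilde k p r X η α‖^2 * ‖Fexp k p r X c η α‖^(2*t)

/-- K_{a,b}(X): for a ≥ 1 the maximum of K_{a,b}(X;ξ,η) over admissible ξ, η;
for a = 0 the pre-congruencing quantity K_{0,b}(X) = max_η K̃_b(X;η). -/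
def Kmax (k p r t : ℕ) (X : ℝ) (a b : ℕ) : ℝ :=
  if a = 0 then sSup {v : ℝ | ∃ η : ℤ, 1 ≤ η ∧ η ≤ (p:ℤ)^b ∧ v = Ktilde k p r t X b η}
  else sSup {v : ℝ | ∃ ξ η : ℤ, 1 ≤ ξ ∧ ξ ≤ (p:ℤ)^a ∧ 1 ≤ η ∧ η ≤ (p:ℤ)^b ∧
    ¬ Int.ModEq (p:ℤ) η ξ ∧ v = Kab k p r t X a b ξ η}

/-- λ = limsup_{Y→∞} log J_{sr,k}(Y)/log Y. -/
def lamExp (k sr : ℕ) : ℝ :=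
  Filter.limsup (fun Y : ℝ => Real.log ((Jcount sr k Y : ℝ)) / Real.log Y) Filter.atTop

/-- θ = (16t)^{-N-1}. -/
def thetaC (t N : ℕ) : ℝ := (16*(t:ℝ)) ^ (-((N:ℝ)+1))

/-- δ = θ/(1000 N t^N). -/
def deltaC (t N : ℕ) : ℝ := thetaC t N / (1000 * (N:ℝ) * (t:ℝ)^N)

/-- M = X^θ. -/
def Mval (t N : ℕ) (X : ℝ) : ℝ := X ^ thetaC t N

/-- κ = r(t+1) - (1/2)(t+r-k)(t+r-k-1+(2r-2)/(t-1)). -/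
def kappa (k r t : ℕ) : ℝ :=
  (r : ℝ) * ((t : ℝ) + 1) -
    (1/2) * ((t : ℝ) + r - k) * ((t : ℝ) + r - k - 1 + (2*(r:ℝ) - 2)/((t:ℝ) - 1))

/-- Λ = λ - 2(s+r) + κ, with s = rt. -/
def LamC (k r t : ℕ) : ℝ := lamExp k (r*(t+1)) - 2*((r*(t+1) : ℕ) : ℝ) + kappa k r t

/-- The normalised mean value ⟦K_{a,b}(X)⟧ = K_{a,b}(X) (X/M^b)^{-2s} (X/M^a)^{κ-2r}. -/
def normK (k p r t N : ℕ) (X : ℝ) (a b : ℕ) : ℝ :=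
  Kmax k p r t X a b * (X / (Mval t N X)^b) ^ (-(2*((r*t : ℕ):ℝ))) *
    (X / (Mval t N X)^a) ^ (kappa k r t - 2*(r:ℝ))

/-- μ = (1/2)(t+r-k)(t+r-k-1). -/
def muC (k r t : ℕ) : ℝ := (1/2) * ((t:ℝ)+r-k) * ((t:ℝ)+r-k-1)

/-- ν = (1/2)(t+r-k)(k+r-t-1). -/
def nuC (k r t : ℕ) : ℝ := (1/2) * ((t:ℝ)+r-k) * ((k:ℝ)+r-t-1)

/-!
By orthogonality `K_{a,b}(X; ξ, η)` counts solutions of a system of Diophantine equations, and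
translating that system by `η` shows that `∑ (x_i - η) ^ j ≡ ∑ (y_i - η) ^ j` modulo `p ^ (j b)`
for `1 ≤ j ≤ k`, where `x` and `y` are the `r`-tuples of variables underlying the two factors
`F_a(α; ξ)`. Fixing the residues of the power sums of degree `k - r < j ≤ t` modulo `p ^ (t b)`
costs `p ^ (μ b)`.  Writing `x_i = ξ + p ^ a u_i`, Taylor expansion about `ξ - η` produces
combinations of these powers whose reductions modulo `p` form a nonsingular system in `u`, so
Newton's identities and Hensel's lemma leave few possibilities for `x` modulo `p ^ (t b)`.

Cauchy's inequality over these residue classes bounds `K_{a,b}` by their number times a mean value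
of `|f_{tb}| ^ {2r} |F_b| ^ {2t}`, and Hölder's inequality with exponents `t` and `t / (t - 1)`
splits that into `I_{b,tb}` and `∫ |F_b| ^ {2(t+1)}`.  The latter is at most `J_{s+r,k}(X / M ^ b)`
up to a constant, by the affine invariance of the Vinogradov system.
-/

section PowerSums

open Polynomial (X C)

variable {σ R : Type*} [Fintype σ] [CommRing R] [IsDomain R]

theorem aeval_esymm_eq_of_sum_pow_eq {m : ℕ} (hR : ∀ n ∈ Icc 1 m, (n : R) ≠ 0) {u v : σ → R}
    (huv : ∀ n ∈ Icc 1 m, ∑ i, u i ^ n = ∑ i, v i ^ n) {n : ℕ} (hn : n ≤ m) :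
    MvPolynomial.aeval u (MvPolynomial.esymm σ R n) =
      MvPolynomial.aeval v (MvPolynomial.esymm σ R n) := by
  induction n using Nat.strong_induction_on with
  | _ n ih =>
    obtain rfl | hpos := Nat.eq_zero_or_pos n
    · simp
    have newton := fun w : σ → R =>
      congrArg (MvPolynomial.aeval w) (MvPolynomial.mul_esymm_eq_sum σ R n)
    simp only [map_mul, map_natCast, map_pow, map_neg, map_one, map_sum] at newton
    refine mul_left_cancel₀ (hR n (mem_Icc.2 ⟨hpos, hn⟩)) ?_
    rw [newton, newton]
    congr 1
    refine Finset.sum_congr rfl fun x hx => ?_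
    obtain ⟨hx, hxn⟩ := mem_filter.1 hx
    have hadd := HasAntidiagonal.mem_antidiagonal.1 hx
    rw [ih x.1 hxn (by omega)]
    congr 1
    simpa [MvPolynomial.psum] using huv x.2 (mem_Icc.2 (by omega))

theorem map_univ_val_eq_of_sum_pow_eq (hR : ∀ n ∈ Icc 1 (Fintype.card σ), (n : R) ≠ 0)
    {u v : σ → R} (huv : ∀ n ∈ Icc 1 (Fintype.card σ), ∑ i, u i ^ n = ∑ i, v i ^ n) :
    univ.val.map u = univ.val.map v := by
  have hprod : ((univ.val.map u).map fun a => X - C a).prod =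
      ((univ.val.map v).map fun a => X - C a).prod := by
    rw [Multiset.prod_X_sub_X_eq_sum_esymm, Multiset.prod_X_sub_X_eq_sum_esymm]
    simp only [Multiset.card_map]
    refine Finset.sum_congr rfl fun j hj => ?_
    rw [← MvPolynomial.aeval_esymm_eq_multiset_esymm σ R,
      ← MvPolynomial.aeval_esymm_eq_multiset_esymm σ R,
      aeval_esymm_eq_of_sum_pow_eq hR huv (Nat.lt_succ_iff.1 (mem_range.1 hj))]
  simpa only [Polynomial.roots_multiset_prod_X_sub_C] using congrArg Polynomial.roots hprod

end PowerSums

section Hensel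

open Polynomial (X C)
open scoped Polynomial

variable {R ι κ : Type*} [CommRing R] [Fintype ι]

/-- The Jacobian of the diagonal system `∑ i, ψ h (x i)`, indexed by `h : κ`, has trivial kernel
modulo `π` at the point `y`. -/
def NonsingularModulo (π : R) (ψ : κ → R[X]) (y : ι → R) : Prop :=
  ∀ d : ι → R, (∀ h, π ∣ ∑ i, (ψ h).derivative.eval (y i) * d i) → ∀ i, π ∣ d i

theorem exists_sum_eval_add_mul_sub_eq (f : R[X]) (m : R) (y d : ι → R) :
    ∃ K, ∑ i, (f.eval (y i + m * d i) - f.eval (y i)) =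
      m * (∑ i, f.derivative.eval (y i) * d i + m * K) := by
  refine ⟨∑ i, (f.binomExpansion (y i) (m * d i)).1 * d i ^ 2, ?_⟩
  rw [mul_add, Finset.mul_sum, Finset.mul_sum, Finset.mul_sum, ← Finset.sum_add_distrib]
  refine Finset.sum_congr rfl fun i _ => ?_
  linear_combination (f.binomExpansion (y i) (m * d i)).2

theorem NonsingularModulo.pow_dvd_sub [IsDomain R] {π : R} (hπ : π ≠ 0) {ψ : κ → R[X]}
    {y z : ι → R} (hns : NonsingularModulo π ψ y) (hyz : ∀ i, π ∣ z i - y i) {E : ℕ}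
    (hE : ∀ h, π ^ E ∣ ∑ i, ((ψ h).eval (z i) - (ψ h).eval (y i))) (i : ι) :
    π ^ E ∣ z i - y i := by
  induction E generalizing i with
  | zero => simp
  | succ E ih =>
    obtain rfl | hE0 := E.eq_zero_or_pos
    · simpa using hyz i
    choose d hd using ih fun h => (pow_dvd_pow π E.le_succ).trans (hE h)
    have hz : ∀ i, z i = y i + π ^ E * d i := fun i => by rw [← hd]; ring
    suffices π ∣ d i by
      rw [hd i, pow_succ]
      exact mul_dvd_mul_left _ this
    refine hns d (fun h => ?_) i
    obtain ⟨K, hK⟩ := exists_sum_eval_add_mul_sub_eq (ψ h) (π ^ E) y d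
    have hlift : π ^ E * π ∣ π ^ E *
        (∑ i, (ψ h).derivative.eval (y i) * d i + π ^ E * K) := by
      rw [← hK, ← pow_succ]
      simpa only [hz] using hE h
    refine (dvd_add_left ?_).1 ((mul_dvd_mul_iff_left (pow_ne_zero E hπ)).1 hlift)
    exact (dvd_pow_self π hE0.ne').mul_right K

theorem nonsingularModulo_of_monomial {r m : ℕ} {π : R} (hπ : Prime π) {y : Fin r → R}
    (hy : ∀ i j, π ∣ y i - y j → i = j) (hm : ∀ i, ¬ π ∣ y i ^ m) {Δ : Fin r → R}
    (hΔ : ∀ h, ¬ π ∣ Δ h * (m + h + 1 : ℕ)) (S : Fin r → R[X]) :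
    NonsingularModulo π (fun h => C (Δ h) * X ^ (m + h + 1) + C π * S h) y := by
  intro d hd i
  have : (Ideal.span {π}).IsPrime := (Ideal.span_singleton_prime hπ.ne_zero).2 hπ
  let red := Ideal.Quotient.mk (Ideal.span {π})
  have hred : ∀ x, red x = 0 ↔ π ∣ x := fun x => by
    rw [Ideal.Quotient.eq_zero_iff_mem, Ideal.mem_span_singleton]
  have hinj : Function.Injective (red ∘ y) := fun i j hij =>
    hy i j ((hred _).1 (by rw [map_sub, sub_eq_zero]; exact hij))
  have hvandermonde : (fun i => red (d i * y i ^ m)) = 0 := by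
    refine Matrix.eq_zero_of_forall_pow_sum_mul_pow_eq_zero hinj fun h => ?_
    have hsum : red (Δ h * (m + h + 1 : ℕ)) *
        ∑ i, red (d i * y i ^ m) * (red ∘ y) i ^ (h : ℕ) = 0 := by
      rw [← (hred _).2 (hd h), Finset.mul_sum, map_sum]
      refine Finset.sum_congr rfl fun i _ => ?_
      simp only [Polynomial.derivative_C_mul,
        Polynomial.derivative_X_pow, Nat.add_sub_cancel, Polynomial.eval_add, Polynomial.eval_mul,
        Polynomial.eval_pow, Polynomial.eval_X, Polynomial.eval_C,
        Function.comp_apply, map_mul, map_add, map_pow, (hred π).2 dvd_rfl]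
      ring
    exact (mul_eq_zero.1 hsum).resolve_left fun h0 => hΔ h ((hred _).1 h0)
  exact (hπ.dvd_or_dvd ((hred _).1 (congrFun hvandermonde i))).resolve_right (hm i)

end Hensel

section Taylor

open Polynomial (X C)
open scoped Polynomial Nat

variable {R : Type*} [CommRing R]

theorem exists_mul_X_add_C_pow_add_mul_X_pow_eq (ω : R) (m n : ℕ) :
    ∃ U V : R[X], U * (X + C ω) ^ m + V * X ^ n = C (ω ^ (m + n)) := by
  have hmem : ((X + C ω) + -X : R[X]) ^ (m + n) ∈ Ideal.span {(X + C ω) ^ m, X ^ n} := by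
    refine Ideal.add_pow_mem_of_pow_mem_of_le (m := m) (n := n) _
      (Ideal.subset_span (by simp)) ?_ (by omega)
    rw [neg_pow]
    exact Ideal.mul_mem_left _ _ (Ideal.subset_span (by simp))
  obtain ⟨U, V, hUV⟩ := Ideal.mem_span_pair.1 hmem
  refine ⟨U, V, hUV.trans ?_⟩
  rw [Polynomial.C_pow]
  ring

theorem exists_X_pow_dvd_comp_X_add_C_sub (ω : R) (m n h : ℕ) :
    ∃ q : R[X], X ^ m ∣ q ∧ q.degree < (m + n : ℕ) ∧
      X ^ n ∣ q.comp (X + C ω) - C (ω ^ (m + n)) * X ^ h := by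
  nontriviality R
  obtain ⟨U, V, hUV⟩ := exists_mul_X_add_C_pow_add_mul_X_pow_eq ω m n
  have hmonic : (X ^ n : R[X]).Monic := Polynomial.monic_X_pow n
  set G := (X ^ h * U) %ₘ X ^ n
  set W := (X ^ h * U) /ₘ X ^ n
  have hdivision : G + X ^ n * W = X ^ h * U := Polynomial.modByMonic_add_div _ _
  have hG : (Polynomial.taylor (-ω) G).comp (X + C ω) = G := by
    rw [← Polynomial.taylor_apply, Polynomial.taylor_taylor, add_neg_cancel, Polynomial.taylor_zero]
  refine ⟨X ^ m * Polynomial.taylor (-ω) G, dvd_mul_right _ _, ?_, ?_⟩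
  · have hdeg : G.degree < n := by
      simpa using Polynomial.degree_modByMonic_lt (X ^ h * U) hmonic
    refine (Polynomial.degree_mul_le _ _).trans_lt ?_
    rw [Polynomial.degree_X_pow, Polynomial.degree_taylor, Nat.cast_add]
    exact WithBot.add_lt_add_left (WithBot.natCast_ne_bot m) hdeg
  · refine ⟨-(X ^ h * V + (X + C ω) ^ m * W), ?_⟩
    rw [Polynomial.mul_comp, hG, Polynomial.X_pow_comp, ← hUV]
    linear_combination (X + C ω) ^ m * hdivision

theorem exists_derivative_eq_C_factorial_mul {q : R[X]} {N : ℕ} (hq : q.degree < N) :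
    ∃ Q : R[X], Q.derivative = C (N ! : R) * q ∧ Q.natDegree ≤ N ∧
      ∀ m, X ^ m ∣ q → X ^ (m + 1) ∣ Q := by
  set f : ℕ → R := fun i => q.coeff i * (N ! / (i + 1) : ℕ)
  have hcoeff : ∀ i, (∑ j ∈ range N, Polynomial.monomial (j + 1) (f j)).coeff (i + 1) =
      if i < N then f i else 0 := fun i => by simp [Polynomial.coeff_monomial]
  refine ⟨∑ i ∈ range N, Polynomial.monomial (i + 1) (f i), ?_, ?_, fun m hm => ?_⟩
  · ext i
    rw [Polynomial.coeff_derivative, hcoeff, Polynomial.coeff_C_mul]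
    split_ifs with hi
    · have hdiv : ((N ! / (i + 1) : ℕ) : R) * (i + 1) = N ! := by
        exact_mod_cast congrArg (Nat.cast (R := R))
          (Nat.div_mul_cancel (Nat.dvd_factorial i.succ_pos hi))
      rw [mul_assoc, hdiv, mul_comm]
    · rw [Polynomial.coeff_eq_zero_of_degree_lt (hq.trans_le (by simpa using hi)), mul_zero,
        zero_mul]
  · refine Polynomial.natDegree_sum_le_of_forall_le _ _ fun i hi => ?_
    exact (Polynomial.natDegree_monomial_le _).trans (mem_range.1 hi)
  · refine Polynomial.X_pow_dvd_iff.2 fun d hd => ?_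
    rcases d with _ | i
    · simp [Polynomial.coeff_monomial]
    · rw [hcoeff]
      simp [f, Polynomial.X_pow_dvd_iff.1 hm i (by omega)]

theorem exists_eq_C_add_C_mul_X_pow_add [IsDomain R] [CharZero R] {T : R[X]} {e : R} {h n : ℕ}
    (hn : h < n) (hT : X ^ n ∣ T.derivative - C e * X ^ h) :
    ∃ (c Δ : R) (S : R[X]),
      Δ * (h + 1 : ℕ) = e ∧ T = C c + C Δ * X ^ (h + 1) + X ^ (n + 1) * S := by
  have hcoeff : ∀ l < n, T.coeff (l + 1) * (l + 1 : ℕ) = if l = h then e else 0 := fun l hl => by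
    have := Polynomial.X_pow_dvd_iff.1 hT l hl
    rw [Polynomial.coeff_sub, sub_eq_zero, Polynomial.coeff_derivative,
      Polynomial.coeff_C_mul_X_pow] at this
    exact_mod_cast this
  have hdvd : X ^ (n + 1) ∣ T - (C (T.coeff 0) + C (T.coeff (h + 1)) * X ^ (h + 1)) := by
    refine Polynomial.X_pow_dvd_iff.2 fun d hd => ?_
    rcases d with _ | l
    · simp
    · rw [Polynomial.coeff_sub, Polynomial.coeff_add, Polynomial.coeff_C_succ, zero_add,
        Polynomial.coeff_C_mul_X_pow]
      rcases eq_or_ne l h with rfl | hlh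
      · simp
      · have := hcoeff l (by omega)
        rw [if_neg hlh, mul_eq_zero] at this
        simpa [hlh] using this.resolve_right (Nat.cast_ne_zero.2 l.succ_ne_zero)
  obtain ⟨S, hS⟩ := hdvd
  refine ⟨T.coeff 0, T.coeff (h + 1), S, by rw [hcoeff h hn, if_pos rfl], ?_⟩
  linear_combination hS

theorem exists_taylor_eq_C_add_C_mul_X_pow_add [IsDomain R] [CharZero R] (ω : R) (m : ℕ)
    {h n : ℕ} (hn : h < n) :
    ∃ (Q : R[X]) (c Δ : R) (S : R[X]), X ^ (m + 1) ∣ Q ∧ Q.natDegree ≤ m + n ∧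
      Δ * (h + 1 : ℕ) = (m + n)! * ω ^ (m + n) ∧
      Q.comp (X + C ω) = C c + C Δ * X ^ (h + 1) + X ^ (n + 1) * S := by
  obtain ⟨q, hmq, hdeg, hq⟩ := exists_X_pow_dvd_comp_X_add_C_sub ω m n h
  obtain ⟨Q, hder, hQdeg, hQ⟩ := exists_derivative_eq_C_factorial_mul hdeg
  obtain ⟨c, Δ, S, hΔ, hS⟩ := exists_eq_C_add_C_mul_X_pow_add
    (T := Q.comp (X + C ω)) (e := (m + n)! * ω ^ (m + n)) hn (by
      convert hq.mul_left (C ((m + n)! : R)) using 1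
      simp only [Polynomial.derivative_comp, hder, Polynomial.derivative_X_add_C,
        Polynomial.mul_comp, Polynomial.C_comp, Polynomial.C_mul]
      ring)
  exact ⟨Q, c, Δ, S, hQ m hmq, hQdeg, hΔ, hS⟩

theorem eval_eq_sum_Ioc_of_X_pow_dvd {Q : R[X]} {m N : ℕ} (hQ : X ^ (m + 1) ∣ Q)
    (hN : Q.natDegree ≤ N) (x : R) : Q.eval x = ∑ j ∈ Ioc m N, Q.coeff j * x ^ j := by
  rw [Polynomial.eval_eq_sum_range' (Nat.lt_succ_of_le hN)]
  refine (Finset.sum_subset (fun j hj => ?_) fun j hj hj' => ?_).symm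
  · exact mem_range.2 (Nat.lt_succ_of_le (mem_Ioc.1 hj).2)
  · have hjm : j < m + 1 := by
      simp only [mem_range, mem_Ioc] at hj hj'
      omega
    rw [Polynomial.X_pow_dvd_iff.1 hQ j hjm, zero_mul]

theorem exists_eval_add_pow_mul_eq [IsDomain R] [CharZero R] {π ω : R} (hπ : Prime π)
    (hω : ¬ π ∣ ω) {m n h a : ℕ} (hmn : ¬ π ∣ ((m + n)! : R)) (hn : h < n) (ha : a ≠ 0) :
    ∃ (Q : R[X]) (c Δ : R) (S : R[X]), X ^ (m + 1) ∣ Q ∧ Q.natDegree ≤ m + n ∧ ¬ π ∣ Δ ∧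
      ∀ y, Q.eval (ω + π ^ a * y) =
        c + π ^ ((h + 1) * a) * (C Δ * X ^ (h + 1) + C π * S).eval y := by
  obtain ⟨Q, c, Δ, S, hmQ, hdeg, hΔ, hQ⟩ := exists_taylor_eq_C_add_C_mul_X_pow_add ω m hn
  obtain ⟨e, he⟩ : ∃ e, (n + 1) * a = (h + 1) * a + 1 + e := by
    obtain ⟨l, rfl⟩ := Nat.exists_eq_add_of_lt hn
    refine ⟨(l + 1) * a - 1, ?_⟩
    have : 0 < (l + 1) * a := Nat.mul_pos l.succ_pos ha.bot_lt
    rw [show h + l + 1 + 1 = h + 1 + (l + 1) by ring, add_mul (h + 1)]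
    omega
  refine ⟨Q, c, Δ, C (π ^ e) * X ^ (n + 1) * S.comp (C (π ^ a) * X), hmQ, hdeg, ?_, fun y => ?_⟩
  · intro hdvd
    obtain hfac | hpow := hπ.dvd_or_dvd (hΔ ▸ hdvd.mul_right _)
    exacts [hmn hfac, hω (hπ.dvd_of_dvd_pow hpow)]
  · have heval := congrArg (Polynomial.eval (π ^ a * y)) hQ
    have hpow : (π ^ a) ^ (n + 1) = π ^ ((h + 1) * a) * π * π ^ e := by
      rw [← pow_mul, mul_comm a, he, pow_add, pow_add, pow_one]
    have hpow' : (π ^ a) ^ (h + 1) = π ^ ((h + 1) * a) := by rw [← pow_mul, mul_comm]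
    simp only [Polynomial.eval_comp, Polynomial.eval_add, Polynomial.eval_mul,
      Polynomial.eval_pow, Polynomial.eval_X, Polynomial.eval_C] at heval ⊢
    rw [add_comm ω, heval, mul_pow, mul_pow, hpow, hpow']
    ring

/-- The Taylor coefficients of a combination of `x ^ (m + 1), …, x ^ (m + n)` at `ω` can be made
to vanish in all degrees from `1` to `n` but one. -/
theorem exists_pow_dvd_sum_eval_sub [IsDomain R] [CharZero R] {π ω : R} (hπ : Prime π)
    (hω : ¬ π ∣ ω) {m n h a : ℕ} (hmn : ¬ π ∣ ((m + n)! : R)) (hn : h < n) (ha : a ≠ 0)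
    (ι : Type*) [Fintype ι] :
    ∃ (Δ : R) (S : R[X]), ¬ π ∣ Δ ∧ ∀ (E : ℕ) (y z : ι → R),
      (∀ j ∈ Ioc m (m + n), π ^ E ∣ ∑ i, ((ω + π ^ a * y i) ^ j - (ω + π ^ a * z i) ^ j)) →
      π ^ (E - (h + 1) * a) ∣ ∑ i, ((C Δ * X ^ (h + 1) + C π * S).eval (y i) -
        (C Δ * X ^ (h + 1) + C π * S).eval (z i)) := by
  obtain ⟨Q, c, Δ, S, hmQ, hdeg, hΔ, hQ⟩ := exists_eval_add_pow_mul_eq hπ hω hmn hn ha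
  refine ⟨Δ, S, hΔ, fun E y z hE => ?_⟩
  set ψ := C Δ * X ^ (h + 1) + C π * S
  have hcombination : π ^ ((h + 1) * a) * ∑ i, (ψ.eval (y i) - ψ.eval (z i)) =
      ∑ j ∈ Ioc m (m + n),
        Q.coeff j * ∑ i, ((ω + π ^ a * y i) ^ j - (ω + π ^ a * z i) ^ j) := by
    simp_rw [Finset.mul_sum]
    rw [Finset.sum_comm]
    refine Finset.sum_congr rfl fun i _ => ?_
    simp_rw [mul_sub, Finset.sum_sub_distrib, ← eval_eq_sum_Ioc_of_X_pow_dvd hmQ hdeg, hQ]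
    ring
  obtain hle | hle := le_total E ((h + 1) * a)
  · simp [Nat.sub_eq_zero_of_le hle]
  · rw [← mul_dvd_mul_iff_left (pow_ne_zero ((h + 1) * a) hπ.ne_zero), ← pow_add,
      Nat.add_sub_cancel' hle, hcombination]
    exact Finset.dvd_sum fun j hj => (hE j hj).mul_left _

end Taylor

section ResidueClasses

open Polynomial (X C)
open scoped Polynomial Nat

theorem card_image_le_mul_of_fibers {ι γ δ : Type*} [DecidableEq γ] [DecidableEq δ]
    (S : Finset ι) (f : ι → γ) (g : ι → δ) {D E : ℕ} (hg : #(S.image g) ≤ D)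
    (hf : ∀ T ⊆ S, (∀ x ∈ T, ∀ y ∈ T, g x = g y) → #(T.image f) ≤ E) :
    #(S.image f) ≤ D * E := by
  have hsub : S.image f ⊆ (S.image g).biUnion fun d => (S.filter fun x => g x = d).image f := by
    intro c hc
    obtain ⟨x, hx, rfl⟩ := mem_image.1 hc
    exact mem_biUnion.2 ⟨g x, mem_image_of_mem _ hx, mem_image_of_mem _ (mem_filter.2 ⟨hx, rfl⟩)⟩
  refine (card_le_card hsub).trans <| (card_biUnion_le_card_mul _ _ E fun d _ =>
    hf _ (filter_subset _ _) fun x hx y hy => ?_).trans (Nat.mul_le_mul_right _ hg)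
  rw [(mem_filter.1 hx).2, (mem_filter.1 hy).2]

theorem card_image_le_card_image {ι γ δ : Type*} [DecidableEq γ] [DecidableEq δ]
    {S : Finset ι} {f : ι → γ} {g : ι → δ} (h : ∀ x ∈ S, ∀ y ∈ S, g x = g y → f x = f y) :
    #(S.image f) ≤ #(S.image g) := by
  refine (card_image_le_mul_of_fibers S f g le_rfl (E := 1) fun T hT hg => ?_).trans_eq (mul_one _)
  simp only [card_le_one, forall_mem_image]
  exact fun x hx y hy => h x (hT hx) y (hT hy) (hg x hx y hy)

theorem card_filter_Ico_modEq {d : ℤ} (hd : 0 < d) (q : ℕ) (v : ℤ) :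
    #{x ∈ Ico 0 (d * q) | x ≡ v [ZMOD d]} = q := by
  have hcard := Int.Ico_filter_modEq_card 0 (d * q) hd v
  have hd' : (d : ℚ) ≠ 0 := by exact_mod_cast hd.ne'
  have hdiv : (((d * q : ℤ) : ℚ) - v) / d = (0 - v) / d + (q : ℤ) := by
    push_cast
    field_simp
    ring
  rw [hdiv, Int.ceil_add_intCast, Int.cast_zero, add_sub_cancel_left,
    max_eq_left (Int.natCast_nonneg q)] at hcard
  exact_mod_cast hcard

variable {p : ℕ}

theorem card_image_emod_pow_le {ι : Type*} (S : Finset ι) (hp : 0 < p) {f : ι → ℤ} {u : ℕ}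
    (U : ℕ) (hf : ∀ x ∈ S, ∀ y ∈ S, f x ≡ f y [ZMOD p ^ u]) :
    #(S.image fun x => f x % (p : ℤ) ^ U) ≤ p ^ (U - u) := by
  obtain rfl | ⟨x₀, hx₀⟩ := S.eq_empty_or_nonempty
  · simp
  have hpU : (0 : ℤ) < p ^ U := by positivity
  have hsplit : (p : ℤ) ^ U = p ^ min U u * (p ^ (U - u) : ℕ) := by
    rw [Nat.cast_pow, ← pow_add]
    congr 1
    omega
  rw [← card_filter_Ico_modEq (d := p ^ min U u) (by positivity) (p ^ (U - u)) (f x₀), ← hsplit]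
  refine card_le_card fun v hv => ?_
  obtain ⟨x, hx, rfl⟩ := mem_image.1 hv
  refine mem_filter.2 ⟨mem_Ico.2 ⟨Int.emod_nonneg _ hpU.ne', Int.emod_lt_of_pos _ hpU⟩, ?_⟩
  exact ((Int.mod_modEq _ _).of_dvd (pow_dvd_pow _ (min_le_left U u))).trans
    ((hf x hx x₀ hx₀).of_dvd (pow_dvd_pow _ (min_le_right U u)))

theorem card_image_pi_emod_pow_le {ι J : Type*} [Fintype J] (S : Finset ι) (hp : 0 < p)
    {f : J → ι → ℤ} {u : J → ℕ} (U : J → ℕ)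
    (hf : ∀ j, ∀ x ∈ S, ∀ y ∈ S, f j x ≡ f j y [ZMOD p ^ u j]) :
    #(S.image fun x j => f j x % (p : ℤ) ^ U j) ≤ p ^ ∑ j, (U j - u j) := by
  have hsub : (S.image fun x j => f j x % (p : ℤ) ^ U j) ⊆
      Fintype.piFinset fun j => S.image fun x => f j x % (p : ℤ) ^ U j := by
    intro c hc
    obtain ⟨x, hx, rfl⟩ := mem_image.1 hc
    exact Fintype.mem_piFinset.2 fun j => mem_image_of_mem _ hx
  refine (card_le_card hsub).trans ?_
  rw [Fintype.card_piFinset, ← Finset.prod_pow_eq_pow_sum]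
  exact Finset.prod_le_prod' fun j _ => card_image_emod_pow_le S hp (U j) (hf j)

variable {r : ℕ}

theorem exists_modEq_of_sum_pow_modEq (hp : p.Prime) (hrp : r < p) {y z : Fin r → ℤ}
    (hyz : ∀ n ∈ Icc 1 r, ∑ i, y i ^ n ≡ ∑ i, z i ^ n [ZMOD p]) (i : Fin r) :
    ∃ j, z j ≡ y i [ZMOD p] := by
  have : Fact p.Prime := ⟨hp⟩
  have hroots :
      univ.val.map (fun i => (y i : ZMod p)) = univ.val.map (fun i => (z i : ZMod p)) := by
    refine map_univ_val_eq_of_sum_pow_eq (fun n hn h0 => ?_) fun n hn => ?_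
    · rw [Fintype.card_fin, mem_Icc] at hn
      exact hrp.not_ge ((Nat.le_of_dvd hn.1 ((ZMod.natCast_eq_zero_iff n p).1 h0)).trans hn.2)
    · rw [Fintype.card_fin] at hn
      exact_mod_cast (ZMod.intCast_eq_intCast_iff _ _ p).2 (hyz n hn)
  have hmem : (y i : ZMod p) ∈ univ.val.map fun i => (z i : ZMod p) :=
    hroots ▸ Multiset.mem_map_of_mem _ (mem_univ i)
  obtain ⟨j, -, hj⟩ := Multiset.mem_map.1 hmem
  exact ⟨j, (ZMod.intCast_eq_intCast_iff _ _ p).1 hj⟩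

theorem card_image_emod_le_of_sum_pow_modEq (hp : p.Prime) (hrp : r < p)
    {T : Finset (Fin r → ℤ)}
    (hT : ∀ y ∈ T, ∀ z ∈ T, ∀ n ∈ Icc 1 r, ∑ i, y i ^ n ≡ ∑ i, z i ^ n [ZMOD p]) :
    #(T.image fun y i => y i % (p : ℤ)) ≤ r ^ r := by
  obtain rfl | ⟨z, hz⟩ := T.eq_empty_or_nonempty
  · simp
  have hsub : (T.image fun y i => y i % (p : ℤ)) ⊆
      Fintype.piFinset fun _ : Fin r => univ.image fun j => z j % (p : ℤ) := by
    intro c hc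
    obtain ⟨y, hy, rfl⟩ := mem_image.1 hc
    refine Fintype.mem_piFinset.2 fun i => ?_
    obtain ⟨j, hj⟩ := exists_modEq_of_sum_pow_modEq hp hrp (hT y hy z hz) i
    exact mem_image.2 ⟨j, mem_univ j, hj⟩
  refine (card_le_card hsub).trans ?_
  rw [Fintype.card_piFinset_const]
  exact Nat.pow_le_pow_left (card_image_le.trans_eq (by simp)) r

theorem sum_modEq_sum_iff_dvd {ι : Type*} {s : Finset ι} {m : ℤ} {f g : ι → ℤ} :
    ∑ i ∈ s, f i ≡ ∑ i ∈ s, g i [ZMOD m] ↔ m ∣ ∑ i ∈ s, (g i - f i) := by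
  rw [Finset.sum_sub_distrib, Int.modEq_iff_dvd]

theorem card_image_emod_pow_le_of_nonsingularModulo (hp : p.Prime) (hrp : r < p) {κ : Type*}
    (ψ : κ → ℤ[X]) (E : ℕ) {T : Finset (Fin r → ℤ)}
    (hpow : ∀ y ∈ T, ∀ z ∈ T, ∀ n ∈ Icc 1 r, ∑ i, y i ^ n ≡ ∑ i, z i ^ n [ZMOD p])
    (hns : ∀ y ∈ T, NonsingularModulo (p : ℤ) ψ y)
    (hψ : ∀ y ∈ T, ∀ z ∈ T, ∀ h,
      ∑ i, (ψ h).eval (y i) ≡ ∑ i, (ψ h).eval (z i) [ZMOD p ^ E]) :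
    #(T.image fun y i => y i % (p : ℤ) ^ E) ≤ r ^ r := by
  refine (card_image_le_card_image fun y hy z hz hyz => ?_).trans
    (card_image_emod_le_of_sum_pow_modEq hp hrp hpow)
  funext i
  exact Int.modEq_iff_dvd.2 <| (hns y hy).pow_dvd_sub (by exact_mod_cast hp.ne_zero)
    (fun j => Int.modEq_iff_dvd.1 (congrFun hyz j))
    (fun h => sum_modEq_sum_iff_dvd.1 (hψ y hy z hz h)) i

theorem not_dvd_mul_natCast (hp : p.Prime) {Δ : ℤ} (hΔ : ¬ (p : ℤ) ∣ Δ) {n : ℕ} (hn : 0 < n)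
    (hnp : n < p) : ¬ (p : ℤ) ∣ Δ * n := fun h =>
  (Nat.not_dvd_of_pos_of_lt hn hnp) <| Int.natCast_dvd_natCast.1 <|
    ((Nat.prime_iff_prime_int.1 hp).dvd_or_dvd h).resolve_left hΔ

theorem card_image_emod_pow_le_of_not_dvd {k E : ℕ} (hp : p.Prime) (hpk : k < p) (hrk : r ≤ k)
    {T : Finset (Fin r → ℤ)} (hinj : ∀ y ∈ T, ∀ i j, (p : ℤ) ∣ y i - y j → i = j)
    (hT : ∀ y ∈ T, ∀ i, ¬ (p : ℤ) ∣ y i)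
    (hpow : ∀ y ∈ T, ∀ z ∈ T, ∀ n ∈ Icc 1 r, ∑ i, y i ^ n ≡ ∑ i, z i ^ n [ZMOD p])
    (hhigh : ∀ y ∈ T, ∀ z ∈ T, ∀ j ∈ Ioc (k - r) k,
      ∑ i, y i ^ j ≡ ∑ i, z i ^ j [ZMOD p ^ E]) :
    #(T.image fun y i => y i % (p : ℤ) ^ E) ≤ r ^ r := by
  have hpZ := Nat.prime_iff_prime_int.1 hp
  refine card_image_emod_pow_le_of_nonsingularModulo hp (hrk.trans_lt hpk) _ E hpow
    (fun y hy => nonsingularModulo_of_monomial hpZ (m := k - r) (hinj y hy)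
      (fun i hi => hT y hy i (hpZ.dvd_of_dvd_pow hi)) (Δ := fun _ => 1)
      (fun h => not_dvd_mul_natCast hp hpZ.not_dvd_one (by omega) (by omega)) fun _ => 0) ?_
  intro y hy z hz h
  simpa using hhigh y hy z hz (k - r + h + 1) (mem_Ioc.2 (by omega))

theorem sum_pow_modEq_of_sum_eval_modEq {ι : Type*} [Fintype ι] (hp : p.Prime) {Δ : ℤ}
    (hΔ : ¬ (p : ℤ) ∣ Δ) {S : ℤ[X]} {n : ℕ} {y z : ι → ℤ}
    (h : ∑ i, (C Δ * X ^ n + C (p : ℤ) * S).eval (y i) ≡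
      ∑ i, (C Δ * X ^ n + C (p : ℤ) * S).eval (z i) [ZMOD p]) :
    ∑ i, y i ^ n ≡ ∑ i, z i ^ n [ZMOD p] := by
  rw [sum_modEq_sum_iff_dvd] at h ⊢
  have hexpand : ∑ i, ((C Δ * X ^ n + C (p : ℤ) * S).eval (z i) -
      (C Δ * X ^ n + C (p : ℤ) * S).eval (y i)) =
      Δ * ∑ i, (z i ^ n - y i ^ n) + p * ∑ i, (S.eval (z i) - S.eval (y i)) := by
    rw [Finset.mul_sum, Finset.mul_sum, ← Finset.sum_add_distrib]
    refine Finset.sum_congr rfl fun i _ => ?_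
    simp only [Polynomial.eval_add, Polynomial.eval_mul, Polynomial.eval_pow, Polynomial.eval_X,
      Polynomial.eval_C]
    ring
  rw [hexpand, dvd_add_left (dvd_mul_right _ _)] at h
  exact ((Nat.prime_iff_prime_int.1 hp).dvd_or_dvd h).resolve_left hΔ

/-- The powers of degree exceeding `t` are known to the higher precision `p ^ ((t + 1) * b)`, which
absorbs the loss incurred in the combinations with leading monomial of degree at most `k - t`. -/
theorem exists_sum_eval_modEq_of_sum_pow_modEq {k t a b h : ℕ} (hp : p.Prime) (hpk : k < p)
    (hrk : r ≤ k) (htk : t ≤ k) (ha : a ≠ 0) (hba : (k - t - 1) * a ≤ b) {ω : ℤ}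
    (hω : ¬ (p : ℤ) ∣ ω) (hh : h < r) :
    ∃ (Δ : ℤ) (S : ℤ[X]), ¬ (p : ℤ) ∣ Δ ∧ ∀ y z : Fin r → ℤ,
      (∀ j ∈ Ioc t k,
        ∑ i, (ω + p ^ a * y i) ^ j ≡ ∑ i, (ω + p ^ a * z i) ^ j [ZMOD p ^ (j * b)]) →
      (∀ j ∈ Ioc (k - r) k,
        ∑ i, (ω + p ^ a * y i) ^ j ≡ ∑ i, (ω + p ^ a * z i) ^ j [ZMOD p ^ (t * b)]) →
      ∑ i, (C Δ * X ^ (h + 1) + C (p : ℤ) * S).eval (y i) ≡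
        ∑ i, (C Δ * X ^ (h + 1) + C (p : ℤ) * S).eval (z i)
          [ZMOD p ^ (t * b - a - if h < k - t then 0 else h * a)] := by
  have hpZ := Nat.prime_iff_prime_int.1 hp
  have hfac : ∀ m n, m + n = k → ¬ (p : ℤ) ∣ ((m + n)! : ℕ) := fun m n hmn hdvd =>
    hpk.not_ge (hmn ▸ hp.dvd_factorial.1 (Int.natCast_dvd_natCast.1 hdvd))
  simp only [sum_modEq_sum_iff_dvd]
  split_ifs with hkt
  · obtain ⟨Δ, S, hΔ, hS⟩ :=
      exists_pow_dvd_sum_eval_sub hpZ hω (hfac t (k - t) (by omega)) hkt ha (Fin r)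
    refine ⟨Δ, S, hΔ, fun y z hhigh _ => (pow_dvd_pow _ ?_).trans (hS ((t + 1) * b) z y ?_)⟩
    · have hle : h * a ≤ b := (Nat.mul_le_mul_right a (by omega)).trans hba
      rw [add_mul, add_mul, one_mul, one_mul]
      omega
    · intro j hj
      rw [Nat.add_sub_cancel' htk] at hj
      exact (pow_dvd_pow _ (Nat.mul_le_mul_right b (mem_Ioc.1 hj).1)).trans (hhigh j hj)
  · obtain ⟨Δ, S, hΔ, hS⟩ :=
      exists_pow_dvd_sum_eval_sub hpZ hω (hfac (k - r) r (by omega)) hh ha (Fin r)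
    refine ⟨Δ, S, hΔ, fun y z _ hall => (pow_dvd_pow _ ?_).trans (hS (t * b) z y ?_)⟩
    · rw [add_mul, one_mul]
      omega
    · rwa [Nat.sub_add_cancel hrk]

theorem card_image_emod_pow_le_of_sum_eval_modEq (hp : p.Prime) (hrp : r < p) {E : ℕ} (hE : E ≠ 0)
    {Δ : Fin r → ℤ} (hΔ : ∀ h, ¬ (p : ℤ) ∣ Δ h) {S : Fin r → ℤ[X]} {T : Finset (Fin r → ℤ)}
    (hinj : ∀ y ∈ T, ∀ i j, (p : ℤ) ∣ y i - y j → i = j)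
    (hT : ∀ y ∈ T, ∀ z ∈ T, ∀ h : Fin r,
      ∑ i, (C (Δ h) * X ^ ((h : ℕ) + 1) + C (p : ℤ) * S h).eval (y i) ≡
        ∑ i, (C (Δ h) * X ^ ((h : ℕ) + 1) + C (p : ℤ) * S h).eval (z i) [ZMOD p ^ E]) :
    #(T.image fun y i => y i % (p : ℤ) ^ E) ≤ r ^ r := by
  have hpZ := Nat.prime_iff_prime_int.1 hp
  refine card_image_emod_pow_le_of_nonsingularModulo hp hrp _ E ?_ (fun y hy => ?_) hT
  · intro y hy z hz n hn
    obtain ⟨h, rfl⟩ : ∃ h : Fin r, n = h + 1 :=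
      ⟨⟨n - 1, by grind⟩, by grind⟩
    exact sum_pow_modEq_of_sum_eval_modEq hp (hΔ h) ((hT y hy z hz h).of_dvd (dvd_pow_self _ hE))
  · simpa only [zero_add] using nonsingularModulo_of_monomial (m := 0) hpZ (hinj y hy)
      (fun i => by simpa using hpZ.not_dvd_one)
      (fun h => not_dvd_mul_natCast hp (hΔ h) (by omega) (by omega)) S

theorem card_image_emod_pow_le_of_add_pow_mul {k t a b : ℕ} (hp : p.Prime) (hpk : k < p)
    (hrk : r ≤ k) (ht : 1 ≤ t) (htk : t ≤ k) (ha : a ≠ 0) (hab : a < b)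
    (hba : (k - t - 1) * a ≤ b) {ω : ℤ} (hω : ¬ (p : ℤ) ∣ ω) {T : Finset (Fin r → ℤ)}
    (hinj : ∀ y ∈ T, ∀ i j, (p : ℤ) ∣ y i - y j → i = j)
    (hhigh : ∀ y ∈ T, ∀ z ∈ T, ∀ j ∈ Ioc t k,
      ∑ i, (ω + p ^ a * y i) ^ j ≡ ∑ i, (ω + p ^ a * z i) ^ j [ZMOD p ^ (j * b)])
    (hall : ∀ y ∈ T, ∀ z ∈ T, ∀ j ∈ Ioc (k - r) k,
      ∑ i, (ω + p ^ a * y i) ^ j ≡ ∑ i, (ω + p ^ a * z i) ^ j [ZMOD p ^ (t * b)]) :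
    #(T.image fun y i => y i % (p : ℤ) ^ (t * b - a)) ≤
      p ^ (∑ h ∈ Ico (k - t) r, h * a) * r ^ r := by
  choose Δ S hΔ hS using fun h : Fin r =>
    exists_sum_eval_modEq_of_sum_pow_modEq hp hpk hrk htk ha hba hω h.2
  have hE : t * b - a ≠ 0 := Nat.sub_ne_zero_of_lt (hab.trans_le (Nat.le_mul_of_pos_left b ht))
  refine card_image_le_mul_of_fibers T _ (fun y h => (∑ i, (C (Δ h) * X ^ ((h : ℕ) + 1) +
    C (p : ℤ) * S h).eval (y i)) % (p : ℤ) ^ (t * b - a)) ?_ fun U hU hconst =>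
    card_image_emod_pow_le_of_sum_eval_modEq hp (hrk.trans_lt hpk) hE hΔ
      (fun y hy => hinj y (hU hy)) fun y hy z hz => congrFun (hconst y hy z hz)
  refine (card_image_pi_emod_pow_le T hp.pos _ fun h y hy z hz =>
    hS h y z (hhigh y hy z hz) (hall y hy z hz)).trans (Nat.pow_le_pow_right hp.pos ?_)
  calc ∑ h : Fin r, (t * b - a - (t * b - a - if (h : ℕ) < k - t then 0 else h * a))
      ≤ ∑ h : Fin r, if (h : ℕ) < k - t then 0 else h * a :=
        Finset.sum_le_sum fun h _ => tsub_tsub_le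
    _ = ∑ h ∈ Ico (k - t) r, h * a := by
        rw [Fin.sum_univ_eq_sum_range (fun h => if h < k - t then 0 else h * a) r]
        refine (Finset.sum_subset_zero_on_sdiff (fun h hh => ?_) (fun h hh => ?_)
          fun h hh => ?_).symm
        · exact mem_range.2 (mem_Ico.1 hh).2
        · grind
        · exact (if_neg (mem_Ico.1 hh).1.not_gt).symm

theorem card_image_emod_pow_le_of_modEq {k t a b : ℕ} (hp : p.Prime) (hpk : k < p) (hr : 1 ≤ r)
    (hrk : r ≤ k) (ht : 1 ≤ t) (htk : t ≤ k) (ha : a ≠ 0) (hab : a < b)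
    (hba : (k - t - 1) * a ≤ b) {ξ η : ℤ} {T : Finset (Fin r → ℤ)}
    (hξ : ∀ x ∈ T, ∀ i, x i ≡ ξ [ZMOD p ^ a])
    (hinj : ∀ x ∈ T, ∀ i j, x i ≡ x j [ZMOD p ^ (a + 1)] → i = j)
    (hη : ∀ x ∈ T, ∀ i, ¬ x i ≡ η [ZMOD p])
    (hhigh : ∀ x ∈ T, ∀ y ∈ T, ∀ j ∈ Ioc t k,
      ∑ i, (x i - η) ^ j ≡ ∑ i, (y i - η) ^ j [ZMOD p ^ (j * b)])
    (hall : ∀ x ∈ T, ∀ y ∈ T, ∀ j ∈ Ioc (k - r) k,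
      ∑ i, (x i - η) ^ j ≡ ∑ i, (y i - η) ^ j [ZMOD p ^ (t * b)]) :
    #(T.image fun x i => x i % (p : ℤ) ^ (t * b)) ≤
      p ^ (∑ h ∈ Ico (k - t) r, h * a) * r ^ r := by
  obtain rfl | ⟨x₀, hx₀⟩ := T.eq_empty_or_nonempty
  · simp
  choose! y hy using fun x hx i => (hξ x hx i).symm.dvd
  have hx : ∀ x ∈ T, ∀ i, x i - η = ξ - η + p ^ a * y x i := fun x hx i => by
    rw [← hy x hx i]
    ring
  have hω : ¬ (p : ℤ) ∣ ξ - η := fun hdvd => hη x₀ hx₀ ⟨0, hr⟩ <|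
    ((hξ x₀ hx₀ _).of_dvd (dvd_pow_self _ ha)).trans (Int.modEq_iff_dvd.2 hdvd).symm
  have htransfer : #(T.image fun x i => x i % (p : ℤ) ^ (t * b)) ≤
      #((T.image y).image fun y i => y i % (p : ℤ) ^ (t * b - a)) := by
    rw [image_image]
    refine card_image_le_card_image fun x hx x' hx' hyy => funext fun i => ?_
    have hmod : y x i ≡ y x' i [ZMOD p ^ (t * b - a)] := congrFun hyy i
    have hab' : a ≤ t * b := hab.le.trans (Nat.le_mul_of_pos_left b ht)
    change x i ≡ x' i [ZMOD p ^ (t * b)]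
    rw [← sub_add_cancel (x i) ξ, ← sub_add_cancel (x' i) ξ, hy x hx, hy x' hx',
      ← Nat.add_sub_cancel' hab', pow_add]
    exact (hmod.mul_left' (c := p ^ a)).add_right ξ
  refine htransfer.trans (card_image_emod_pow_le_of_add_pow_mul hp hpk hrk ht htk ha hab hba hω
    ?_ ?_ ?_)
  · simp only [forall_mem_image]
    refine fun x hx i j hij => hinj x hx i j (Int.modEq_iff_dvd.2 ?_)
    have hdvd := mul_dvd_mul_left ((p : ℤ) ^ a) (dvd_sub_comm.1 hij)
    rwa [← pow_succ, mul_sub, ← hy x hx, ← hy x hx, sub_sub_sub_cancel_right] at hdvd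
  · simp only [forall_mem_image]
    intro x hx' z hz j hj
    simpa only [hx x hx', hx z hz] using hhigh x hx' z hz j hj
  · simp only [forall_mem_image]
    intro x hx' z hz j hj
    simpa only [hx x hx', hx z hz] using hall x hx' z hz j hj

theorem card_image_emod_pow_le_of_not_modEq {k E : ℕ} (hp : p.Prime) (hpk : k < p) (hrk : r ≤ k)
    {η : ℤ} {T : Finset (Fin r → ℤ)} (hinj : ∀ x ∈ T, ∀ i j, x i ≡ x j [ZMOD p] → i = j)
    (hη : ∀ x ∈ T, ∀ i, ¬ x i ≡ η [ZMOD p])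
    (hpow : ∀ x ∈ T, ∀ y ∈ T, ∀ j ∈ Icc 1 r,
      ∑ i, (x i - η) ^ j ≡ ∑ i, (y i - η) ^ j [ZMOD p])
    (hall : ∀ x ∈ T, ∀ y ∈ T, ∀ j ∈ Ioc (k - r) k,
      ∑ i, (x i - η) ^ j ≡ ∑ i, (y i - η) ^ j [ZMOD p ^ E]) :
    #(T.image fun x i => x i % (p : ℤ) ^ E) ≤ r ^ r := by
  have htransfer : #(T.image fun x i => x i % (p : ℤ) ^ E) ≤
      #((T.image fun x i => x i - η).image fun y i => y i % (p : ℤ) ^ E) := by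
    rw [image_image]
    refine card_image_le_card_image fun x _ x' _ hyy => funext fun i => ?_
    exact Int.ModEq.add_right_cancel' (-η) (congrFun hyy i)
  refine htransfer.trans (card_image_emod_pow_le_of_not_dvd hp hpk hrk ?_ ?_ ?_ ?_) <;>
    simp only [forall_mem_image]
  · refine fun x hx i j hij => hinj x hx i j (Int.modEq_iff_dvd.2 (dvd_sub_comm.1 ?_))
    rwa [sub_sub_sub_cancel_right] at hij
  · exact fun x hx i hdvd => hη x hx i (Int.modEq_iff_dvd.2 hdvd).symm
  · exact hpow
  · exact hall

/-- The exponent of `p` in the number of residue classes modulo `p ^ (t * b)` available to the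
conditioned variables; it equals `μ b + ν a`. -/
def congruencingExponent (k r t a b : ℕ) : ℕ :=
  ∑ j ∈ Ioc (k - r) t, (t - j) * b + ∑ h ∈ Ico (k - t) r, h * a

theorem card_image_emod_pow_le_congruencingExponent {k t a b : ℕ} (hp : p.Prime) (hpk : k < p)
    (hr : 1 ≤ r) (hrk : r ≤ k) (ht : 1 ≤ t) (htk : t ≤ k) (hab : a < b)
    (hba : (k - t - 1) * a ≤ b) {ξ η : ℤ}
    {S : Finset (Fin r → ℤ)} (hξ : ∀ x ∈ S, ∀ i, x i ≡ ξ [ZMOD p ^ a])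
    (hinj : ∀ x ∈ S, ∀ i j, x i ≡ x j [ZMOD p ^ (a + 1)] → i = j)
    (hη : ∀ x ∈ S, ∀ i, ¬ x i ≡ η [ZMOD p])
    (hS : ∀ x ∈ S, ∀ y ∈ S, ∀ j ∈ Icc 1 k,
      ∑ i, (x i - η) ^ j ≡ ∑ i, (y i - η) ^ j [ZMOD p ^ (j * b)]) :
    #(S.image fun x i => x i % (p : ℤ) ^ (t * b)) ≤
      p ^ congruencingExponent k r t a b * r ^ r := by
  rw [congruencingExponent, pow_add, mul_assoc]
  refine card_image_le_mul_of_fibers S _ (fun x (j : Ioc (k - r) t) =>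
    (∑ i, (x i - η) ^ (j : ℕ)) % (p : ℤ) ^ (t * b)) ?_ fun T hTS hconst => ?_
  · refine (card_image_pi_emod_pow_le S hp.pos (u := fun j : Ioc (k - r) t => j * b) _
      fun j x hx y hy => hS x hx y hy j (by grind)).trans (Nat.pow_le_pow_right hp.pos ?_)
    rw [Finset.sum_coe_sort (Ioc (k - r) t) fun j => t * b - j * b]
    exact Finset.sum_le_sum fun j _ => (Nat.sub_mul t j b).ge
  · have hall : ∀ x ∈ T, ∀ y ∈ T, ∀ j ∈ Ioc (k - r) k,
        ∑ i, (x i - η) ^ j ≡ ∑ i, (y i - η) ^ j [ZMOD p ^ (t * b)] := by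
      intro x hx y hy j hj
      obtain hjt | hjt := le_or_gt j t
      · exact congrFun (hconst x hx y hy) ⟨j, mem_Ioc.2 ⟨(mem_Ioc.1 hj).1, hjt⟩⟩
      · exact (hS x (hTS hx) y (hTS hy) j (by grind)).of_dvd
          (pow_dvd_pow _ (Nat.mul_le_mul_right b hjt.le))
    obtain rfl | ha := eq_or_ne a 0
    · refine (card_image_emod_pow_le_of_not_modEq hp hpk hrk
        (fun x hx => by simpa using hinj x (hTS hx)) (fun x hx => hη x (hTS hx))
        (fun x hx y hy j hj => ?_) hall).trans_eq (by simp)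
      have hjb : j * b ≠ 0 := mul_ne_zero (by grind) hab.ne'
      exact (hS x (hTS hx) y (hTS hy) j (by grind)).of_dvd (dvd_pow_self _ hjb)
    · exact card_image_emod_pow_le_of_modEq hp hpk hr hrk ht htk ha hab hba
        (fun x hx => hξ x (hTS hx)) (fun x hx => hinj x (hTS hx)) (fun x hx => hη x (hTS hx))
        (fun x hx y hy j hj => hS x (hTS hx) y (hTS hy) j (by grind)) hall

end ResidueClasses

section TrigSum

variable {k : ℕ} {ι κ : Type*}

theorem ec_eq_fourierChar (x : ℝ) : ec x = Real.fourierChar x := by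
  rw [ec, Real.fourierChar_apply]
  push_cast
  ring_nf

theorem integral_ec_mul_intCast (n : ℤ) :
    ∫ x in Set.Ico (0 : ℝ) 1, ec (x * n) = if n = 0 then 1 else 0 := by
  rw [integral_Ico_eq_integral_Ioc, ← intervalIntegral.integral_of_le zero_le_one]
  split_ifs with hn
  · simp [hn, ec]
  · have hc : (2 * Real.pi * Complex.I * n : ℂ) ≠ 0 := by simp [Real.pi_ne_zero, hn]
    have hec (x : ℝ) : ec (x * n) = Complex.exp ((2 * Real.pi * Complex.I * n : ℂ) * x) := by
      rw [ec]
      push_cast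
      ring_nf
    have hexp : Complex.exp (2 * Real.pi * Complex.I * n * (1 : ℝ)) = 1 :=
      Complex.exp_eq_one_iff.2 ⟨n, by push_cast; ring⟩
    simp_rw [hec, integral_exp_mul_complex hc, hexp]
    simp

/-- The additive character `α ↦ e(α₁n₁ + ⋯ + αₖnₖ)` with integral frequency `n`. -/
def character (n : Fin k → ℤ) (α : Fin k → ℝ) : ℂ := ec (∑ j, α j * n j)

theorem character_add (m n : Fin k → ℤ) (α : Fin k → ℝ) :
    character (m + n) α = character m α * character n α := by
  simp only [character, ec_eq_fourierChar, Pi.add_apply, Int.cast_add, mul_add, sum_add_distrib,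
    AddChar.map_add_eq_mul, Circle.coe_mul]

theorem character_sum (s : Finset ι) (n : ι → Fin k → ℤ) (α : Fin k → ℝ) :
    character (∑ i ∈ s, n i) α = ∏ i ∈ s, character (n i) α := by
  induction s using Finset.cons_induction with
  | empty => simp [character, ec]
  | cons i s hi ih => rw [sum_cons, prod_cons, character_add, ih]

theorem conj_character (n : Fin k → ℤ) (α : Fin k → ℝ) :
    (starRingEnd ℂ) (character n α) = character (-n) α := by
  simp only [character, ec_eq_fourierChar, Pi.neg_apply, Int.cast_neg, mul_neg, sum_neg_distrib,
    AddChar.map_neg_eq_inv, Circle.coe_inv_eq_conj]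

theorem norm_character (n : Fin k → ℤ) (α : Fin k → ℝ) : ‖character n α‖ = 1 := by
  rw [character, ec_eq_fourierChar]
  exact Circle.norm_coe _

theorem continuous_character (n : Fin k → ℤ) : Continuous (character n) := by
  unfold character ec
  fun_prop

theorem integrableOn_box {E : Type*} [NormedAddCommGroup E] {f : (Fin k → ℝ) → E}
    (hf : Continuous f) : IntegrableOn f (box k) :=
  (hf.continuousOn.integrableOn_compact (isCompact_univ_pi fun _ => isCompact_Icc)).mono_set
    (Set.pi_mono fun _ _ => Set.Ico_subset_Icc_self)

theorem volume_restrict_box (k : ℕ) : (volume : Measure (Fin k → ℝ)).restrict (box k) =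
    Measure.pi fun _ => (volume : Measure ℝ).restrict (Set.Ico 0 1) := by
  rw [_root_.box, volume_pi, Measure.restrict_pi_pi]

theorem integral_character (n : Fin k → ℤ) :
    ∫ α in box k, character n α = if n = 0 then 1 else 0 := by
  have hprod (α : Fin k → ℝ) : character n α = ∏ j, ec (α j * n j) := by
    simp only [character, ec, Complex.ofReal_sum, mul_sum, Complex.exp_sum]
  simp only [hprod]
  rw [volume_restrict_box, integral_fintype_prod_eq_prod (fun j (x : ℝ) => ec (x * n j))]
  simp only [integral_ec_mul_intCast]
  split_ifs with hn
  · simp [hn]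
  · obtain ⟨j, hj⟩ := Function.ne_iff.1 hn
    exact prod_eq_zero (mem_univ j) (if_neg hj)

/-- The trigonometric polynomial whose frequencies are the points `P x` with `x ∈ A`. -/
def trigSum (A : Finset ι) (P : ι → Fin k → ℤ) (α : Fin k → ℝ) : ℂ := ∑ x ∈ A, character (P x) α

theorem continuous_trigSum (A : Finset ι) (P : ι → Fin k → ℤ) : Continuous (trigSum A P) :=
  continuous_finsetSum _ fun _ _ => continuous_character _

theorem integral_norm_sq_trigSum (A : Finset ι) (P : ι → Fin k → ℤ) :
    ∫ α in box k, ‖trigSum A P α‖ ^ 2 = #{z ∈ A ×ˢ A | P z.1 = P z.2} := by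
  have hsq (α : Fin k → ℝ) :
      ((‖trigSum A P α‖ ^ 2 : ℝ) : ℂ) = ∑ z ∈ A ×ˢ A, character (P z.1 - P z.2) α := by
    rw [Complex.ofReal_pow, ← Complex.mul_conj', trigSum, map_sum, sum_mul_sum, sum_product]
    simp only [conj_character, ← character_add, sub_eq_add_neg]
  have hC : ((∫ α in box k, ‖trigSum A P α‖ ^ 2 : ℝ) : ℂ) =
      (#{z ∈ A ×ˢ A | P z.1 = P z.2} : ℂ) := by
    rw [← integral_complex_ofReal]
    simp_rw [hsq]
    rw [integral_finsetSum _ fun z _ => integrableOn_box (continuous_character _)]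
    simp_rw [integral_character, sub_eq_zero, sum_boole]
  exact_mod_cast hC

theorem integral_norm_sq_trigSum_mono {A B : Finset ι} (hAB : A ⊆ B) (P : ι → Fin k → ℤ) :
    ∫ α in box k, ‖trigSum A P α‖ ^ 2 ≤ ∫ α in box k, ‖trigSum B P α‖ ^ 2 := by
  rw [integral_norm_sq_trigSum, integral_norm_sq_trigSum]
  exact_mod_cast card_le_card (filter_subset_filter _ (product_subset_product hAB hAB))

theorem trigSum_mul (A : Finset ι) (P : ι → Fin k → ℤ) (B : Finset κ) (Q : κ → Fin k → ℤ)
    (α : Fin k → ℝ) :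
    trigSum A P α * trigSum B Q α = trigSum (A ×ˢ B) (fun z => P z.1 + Q z.2) α := by
  simp only [trigSum, sum_mul_sum, sum_product, character_add]

theorem norm_sq_mul_trigSum (A : Finset ι) (P : ι → Fin k → ℤ) (B : Finset κ)
    (Q : κ → Fin k → ℤ) (α : Fin k → ℝ) :
    ‖trigSum A P α‖ ^ 2 * ‖trigSum B Q α‖ ^ 2 =
      ‖trigSum (A ×ˢ B) (fun z => P z.1 + Q z.2) α‖ ^ 2 := by
  rw [← mul_pow, ← norm_mul, trigSum_mul]

theorem prod_trigSum {n : ℕ} (A : Fin n → Finset ι) (P : ι → Fin k → ℤ) (α : Fin k → ℝ) :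
    ∏ i, trigSum (A i) P α = trigSum (Fintype.piFinset A) (fun x => ∑ i, P (x i)) α := by
  simp only [trigSum, character_sum, prod_univ_sum]

theorem trigSum_pow (A : Finset ι) (P : ι → Fin k → ℤ) (n : ℕ) (α : Fin k → ℝ) :
    trigSum A P α ^ n =
      trigSum (Fintype.piFinset fun _ : Fin n => A) (fun x => ∑ i, P (x i)) α := by
  rw [← prod_trigSum, prod_const, card_univ, Fintype.card_fin]

section Fiber

variable {γ δ : Type*} [DecidableEq γ] [DecidableEq δ] (A : Finset ι) (P : ι → Fin k → ℤ)

theorem sum_integral_norm_sq_trigSum_filter (m : ι → δ) {D : Finset δ} (hD : ∀ x ∈ A, m x ∈ D) :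
    ∑ d ∈ D, ∫ α in box k, ‖trigSum (A.filter fun x => m x = d) P α‖ ^ 2 =
      #{z ∈ A ×ˢ A | P z.1 = P z.2 ∧ m z.1 = m z.2} := by
  simp_rw [integral_norm_sq_trigSum]
  rw [← Nat.cast_sum, Nat.cast_inj, card_eq_sum_card_fiberwise (f := fun z => m z.1) (t := D)]
  · refine sum_congr rfl fun d _ => congrArg card ?_
    ext z
    simp only [mem_filter, mem_product]
    grind
  · intro z hz
    exact hD _ (mem_product.1 (mem_filter.1 hz).1).1

theorem norm_sq_trigSum_le (cl : ι → γ) {s : Finset γ} (hs : ∀ x ∈ A, cl x ∈ s)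
    (α : Fin k → ℝ) :
    ‖trigSum A P α‖ ^ 2 ≤
      #(A.image cl) * ∑ c ∈ s, ‖trigSum (A.filter fun x => cl x = c) P α‖ ^ 2 := by
  have hsub : A.image cl ⊆ s := image_subset_iff.2 hs
  calc ‖trigSum A P α‖ ^ 2
      = ‖∑ c ∈ A.image cl, trigSum (A.filter fun x => cl x = c) P α‖ ^ 2 := by
        unfold trigSum
        rw [sum_fiberwise_of_maps_to fun _ => mem_image_of_mem cl]
    _ ≤ #(A.image cl) * ∑ c ∈ A.image cl, ‖trigSum (A.filter fun x => cl x = c) P α‖ ^ 2 :=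
        (pow_le_pow_left₀ (norm_nonneg _) (norm_sum_le _ _) 2).trans sq_sum_le_card_mul_sum_sq
    _ ≤ _ := by gcongr

theorem integral_norm_sq_trigSum_le_sum_class {D : ℕ} (cl : ι → γ) {s : Finset γ}
    (hs : ∀ x ∈ A, cl x ∈ s) (hD : #(A.image cl) ≤ D) :
    ∫ α in box k, ‖trigSum A P α‖ ^ 2 ≤
      D * ∑ c ∈ s, ∫ α in box k, ‖trigSum (A.filter fun x => cl x = c) P α‖ ^ 2 := by
  have hint (B : Finset ι) : IntegrableOn (fun α => ‖trigSum B P α‖ ^ 2) (box k) :=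
    integrableOn_box ((continuous_trigSum B P).norm.pow 2)
  rw [← integral_finsetSum _ fun c _ => hint _, ← integral_const_mul]
  refine integral_mono (hint A) ((integrable_finsetSum _ fun c _ => hint _).const_mul _)
    fun α => (norm_sq_trigSum_le A P cl hs α).trans ?_
  gcongr

-- Cauchy–Schwarz is applied on each level set of `m`; the losses do not add up because the level
-- sets are orthogonal.
theorem integral_norm_sq_trigSum_le_of_card_image_le {D : ℕ} (cl : ι → γ) (m : ι → δ)
    (hm : ∀ x ∈ A, ∀ y ∈ A, P x = P y → m x = m y)
    (hD : ∀ d, #((A.filter fun x => m x = d).image cl) ≤ D) :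
    ∫ α in box k, ‖trigSum A P α‖ ^ 2 ≤
      D * ∑ c ∈ A.image cl, ∫ α in box k, ‖trigSum (A.filter fun x => cl x = c) P α‖ ^ 2 := by
  have hsplit : ∫ α in box k, ‖trigSum A P α‖ ^ 2 =
      ∑ d ∈ A.image m, ∫ α in box k, ‖trigSum (A.filter fun x => m x = d) P α‖ ^ 2 := by
    rw [sum_integral_norm_sq_trigSum_filter A P m fun _ => mem_image_of_mem m,
      integral_norm_sq_trigSum]
    congr 2
    refine filter_congr fun z hz => ⟨fun h => ⟨h, ?_⟩, And.left⟩
    exact hm _ (mem_product.1 hz).1 _ (mem_product.1 hz).2 h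
  have hmerge (B : Finset ι) (hB : B ⊆ A) :
      ∑ d ∈ A.image m, ∫ α in box k, ‖trigSum (B.filter fun x => m x = d) P α‖ ^ 2 ≤
        ∫ α in box k, ‖trigSum B P α‖ ^ 2 := by
    rw [sum_integral_norm_sq_trigSum_filter B P m fun x hx => mem_image_of_mem m (hB hx),
      integral_norm_sq_trigSum]
    exact_mod_cast card_le_card (monotone_filter_right _ fun _ _ => And.left)
  rw [hsplit]
  refine (sum_le_sum fun d _ => integral_norm_sq_trigSum_le_sum_class _ P cl
    (fun x hx => mem_image_of_mem cl (mem_filter.1 hx).1) (hD d)).trans ?_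
  rw [← mul_sum, sum_comm]
  simp_rw [filter_comm (fun x => m x = _)]
  gcongr with c
  exact hmerge _ (filter_subset _ _)

theorem integral_norm_sq_mul_trigSum_le_of_card_image_le (B : Finset κ) (Q : κ → Fin k → ℤ)
    {D : ℕ} (cl : ι → γ) (m : ι → δ)
    (hm : ∀ x ∈ A, ∀ y ∈ A, ∀ w ∈ B, ∀ w' ∈ B, P x + Q w = P y + Q w' → m x = m y)
    (hD : ∀ d, #((A.filter fun x => m x = d).image cl) ≤ D) :
    ∫ α in box k, ‖trigSum A P α‖ ^ 2 * ‖trigSum B Q α‖ ^ 2 ≤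
      D * ∑ c ∈ A.image cl, ∫ α in box k,
        ‖trigSum (A.filter fun x => cl x = c) P α‖ ^ 2 * ‖trigSum B Q α‖ ^ 2 := by
  simp_rw [norm_sq_mul_trigSum]
  refine (integral_norm_sq_trigSum_le_of_card_image_le (D := D) (A ×ˢ B) _
    (fun z => cl z.1) (fun z => m z.1) (fun z hz z' hz' h => ?_) fun d => ?_).trans ?_
  · exact hm _ (mem_product.1 hz).1 _ (mem_product.1 hz').1 _ (mem_product.1 hz).2 _
      (mem_product.1 hz').2 h
  · refine (card_le_card fun c hc => ?_).trans (hD d)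
    simp only [mem_image, mem_filter, mem_product] at hc ⊢
    grind
  · have hsub : (A ×ˢ B).image (fun z => cl z.1) ⊆ A.image cl := by
      simp only [image_subset_iff, mem_product]
      exact fun z hz => mem_image_of_mem cl hz.1
    have hfilter (c : γ) : ((A ×ˢ B).filter fun z => cl z.1 = c) =
        (A.filter fun x => cl x = c) ×ˢ B := filter_product_left fun x => cl x = c
    simp_rw [hfilter]
    gcongr

end Fiber

end TrigSum

section ConditionedSums

variable {k p r : ℕ}

/-- The point `(x, x², …, xᵏ)` of the moment curve. -/
def momentCurve (k : ℕ) (x : ℤ) : Fin k → ℤ := fun j => x ^ ((j : ℕ) + 1)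

/-- The vector of the power sums of degrees `1, …, k` of a finite family of integers. -/
def momentSum (k : ℕ) {ι : Type*} [Fintype ι] (x : ι → ℤ) : Fin k → ℤ := ∑ i, momentCurve k (x i)

theorem momentSum_eq_iff {ι : Type*} [Fintype ι] {x y : ι → ℤ} :
    momentSum k x = momentSum k y ↔ ∀ j ∈ Icc 1 k, ∑ i, x i ^ j = ∑ i, y i ^ j := by
  simp only [momentSum, momentCurve, funext_iff, Finset.sum_apply, mem_Icc]
  constructor
  · rintro h j ⟨h1, h2⟩
    obtain ⟨j, rfl⟩ := Nat.exists_eq_add_of_le' h1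
    exact h ⟨j, h2⟩
  · exact fun h j => h _ ⟨Nat.succ_pos _, j.2⟩

/-- The integers of `[1, X]` congruent to `ξ` modulo `p ^ c`. -/
def classSet (p : ℕ) (X : ℝ) (c : ℕ) (ξ : ℤ) : Finset ℤ :=
  {x ∈ Icc 1 ⌊X⌋ | x ≡ ξ [ZMOD p ^ c]}

theorem mem_classSet {X : ℝ} {c : ℕ} {ξ x : ℤ} :
    x ∈ classSet p X c ξ ↔ x ∈ Icc 1 ⌊X⌋ ∧ x ≡ ξ [ZMOD p ^ c] := by
  rw [classSet, mem_filter]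

/-- The `r`-tuples of integers of `[1, X]` congruent to `ξ` modulo `p ^ c`, with entries pairwise
distinct modulo `p ^ (c + 1)`. These are the tuples underlying `Fexp k p r X c ξ`. -/
def condSet (p r : ℕ) (X : ℝ) (c : ℕ) (ξ : ℤ) : Finset (Fin r → ℤ) :=
  {x ∈ Fintype.piFinset fun _ => classSet p X c ξ | ∀ i j, x i ≡ x j [ZMOD p ^ (c + 1)] → i = j}

theorem mem_condSet {X : ℝ} {c : ℕ} {ξ : ℤ} {x : Fin r → ℤ} :
    x ∈ condSet p r X c ξ ↔
      (∀ i, x i ∈ classSet p X c ξ) ∧ ∀ i j, x i ≡ x j [ZMOD p ^ (c + 1)] → i = j := by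
  rw [condSet, mem_filter, Fintype.mem_piFinset]

/-- The tuples of `condSet p r X c ξ` none of whose entries is congruent to `η` modulo `p`. -/
def avoidingSet (p r : ℕ) (X : ℝ) (c : ℕ) (ξ η : ℤ) : Finset (Fin r → ℤ) :=
  {x ∈ condSet p r X c ξ | ∀ i, ¬ x i ≡ η [ZMOD p]}

theorem mem_avoidingSet {X : ℝ} {c : ℕ} {ξ η : ℤ} {x : Fin r → ℤ} :
    x ∈ avoidingSet p r X c ξ η ↔ x ∈ condSet p r X c ξ ∧ ∀ i, ¬ x i ≡ η [ZMOD p] := by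
  rw [avoidingSet, mem_filter]

theorem avoidingSet_eq_condSet {a : ℕ} {X : ℝ} {ξ η : ℤ} (ha : a ≠ 0) (h : ¬ η ≡ ξ [ZMOD p]) :
    avoidingSet p r X a ξ η = condSet p r X a ξ := by
  refine filter_true_of_mem fun x hx i hi => h (hi.symm.trans ?_)
  exact (mem_classSet.1 ((mem_condSet.1 hx).1 i)).2.of_dvd (dvd_pow_self _ ha)

theorem fexp_eq_trigSum (X : ℝ) (c : ℕ) (ξ : ℤ) :
    fexp k p X c ξ = trigSum (classSet p X c ξ) (momentCurve k) := by
  ext α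
  simp [fexp, trigSum, classSet, character, momentCurve]

theorem fexp_congr {X : ℝ} {c : ℕ} {ξ ξ' : ℤ} (h : ξ ≡ ξ' [ZMOD p ^ c]) :
    fexp k p X c ξ = fexp k p X c ξ' := by
  have hset : classSet p X c ξ = classSet p X c ξ' :=
    filter_congr fun x _ => ⟨fun hx => hx.trans h, fun hx => hx.trans h.symm⟩
  rw [fexp_eq_trigSum, fexp_eq_trigSum, hset]

/-- The representative of `x` modulo `q` in the interval `[1, q]`. -/
def posRes (q x : ℤ) : ℤ := (x - 1) % q + 1

theorem posRes_modEq (q x : ℤ) : posRes q x ≡ x [ZMOD q] := by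
  simpa [posRes] using (Int.mod_modEq (x - 1) q).add_right 1

theorem posRes_mem_Icc {q : ℤ} (hq : 0 < q) (x : ℤ) : posRes q x ∈ Set.Icc 1 q := by
  have h₀ := Int.emod_nonneg (x - 1) hq.ne'
  have h₁ := Int.emod_lt_of_pos (x - 1) hq
  rw [posRes, Set.mem_Icc]
  omega

theorem posRes_eq_iff {q x v : ℤ} (hv : v ∈ Set.Icc 1 q) :
    posRes q x = v ↔ x ≡ v [ZMOD q] := by
  constructor
  · rintro rfl
    exact (posRes_modEq q x).symm
  · intro h
    have hv' : (v - 1) % q = v - 1 :=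
      Int.emod_eq_of_lt (sub_nonneg.2 hv.1) (by have := hv.2; omega)
    rw [posRes, h.sub_right 1, hv', sub_add_cancel]

theorem finsum_mem_prod_fexp (X : ℝ) (c : ℕ) {V : Set (Fin r → ℤ)}
    (hV : ∀ v ∈ V, ∀ i, v i ∈ Set.Icc 1 ((p : ℤ) ^ c)) (α : Fin k → ℝ) :
    ∑ᶠ v ∈ V, ∏ i, fexp k p X c (v i) α =
      trigSum {x ∈ Fintype.piFinset fun _ => Icc 1 ⌊X⌋ | (posRes ((p : ℤ) ^ c) ∘ x) ∈ V}
        (momentSum k) α := by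
  have hfin : V.Finite := (Set.Finite.pi' fun _ => Set.finite_Icc 1 ((p : ℤ) ^ c)).subset hV
  have hfiber (v) (hv : v ∈ V) : (Fintype.piFinset fun i => classSet p X c (v i)) =
      {x ∈ {x ∈ Fintype.piFinset fun _ : Fin r => Icc 1 ⌊X⌋ | (posRes ((p : ℤ) ^ c) ∘ x) ∈ V} |
        posRes ((p : ℤ) ^ c) ∘ x = v} := by
    ext x
    have heq : posRes ((p : ℤ) ^ c) ∘ x = v ↔ ∀ i, x i ≡ v i [ZMOD p ^ c] := by
      simp only [funext_iff, Function.comp_apply, posRes_eq_iff (hV v hv _)]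
    simp only [mem_filter, Fintype.mem_piFinset, mem_classSet, forall_and, ← heq]
    grind
  rw [finsum_mem_eq_finite_toFinset_sum _ hfin, trigSum,
    ← sum_fiberwise_of_maps_to (t := hfin.toFinset) (g := fun x => posRes ((p : ℤ) ^ c) ∘ x)
      fun x hx => hfin.mem_toFinset.2 (mem_filter.1 hx).2]
  refine sum_congr rfl fun v hv => ?_
  simp_rw [fexp_eq_trigSum]
  rw [prod_trigSum, hfiber v (hfin.mem_toFinset.1 hv)]
  rfl

theorem posRes_comp_mem_XiSet_iff {c : ℕ} (hp : 0 < p) (ξ : ℤ) (x : Fin r → ℤ) :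
    (posRes ((p : ℤ) ^ (c + 1)) ∘ x) ∈ XiSet p r c ξ ↔
      (∀ i, x i ≡ ξ [ZMOD p ^ c]) ∧ ∀ i j, x i ≡ x j [ZMOD p ^ (c + 1)] → i = j := by
  have hq : (0 : ℤ) < (p : ℤ) ^ (c + 1) := by positivity
  have hξ (y : ℤ) : posRes ((p : ℤ) ^ (c + 1)) y ≡ ξ [ZMOD p ^ c] ↔ y ≡ ξ [ZMOD p ^ c] := by
    have h := (posRes_modEq ((p : ℤ) ^ (c + 1)) y).of_dvd (pow_dvd_pow _ (Nat.le_succ c))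
    exact ⟨h.symm.trans, h.trans⟩
  have hZMod (y z : ℤ) : ((posRes ((p : ℤ) ^ (c + 1)) y : ℤ) : ZMod (p ^ (c + 1))) =
      (posRes ((p : ℤ) ^ (c + 1)) z : ℤ) ↔ y ≡ z [ZMOD p ^ (c + 1)] := by
    rw [ZMod.intCast_eq_intCast_iff, Nat.cast_pow]
    have hy := posRes_modEq ((p : ℤ) ^ (c + 1)) y
    have hz := posRes_modEq ((p : ℤ) ^ (c + 1)) z
    exact ⟨fun h => hy.symm.trans (h.trans hz), fun h => hy.trans (h.trans hz.symm)⟩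
  have hmem (y : ℤ) := posRes_mem_Icc hq y
  simp only [Set.mem_Icc] at hmem
  simp only [XiSet, Set.mem_ofPred_eq, Function.comp_apply, hξ, hmem, and_self, implies_true,
    true_and, Function.Injective, hZMod]

theorem Fexp_eq_trigSum (hp : 0 < p) (X : ℝ) (c : ℕ) (ξ : ℤ) :
    Fexp k p r X c ξ = trigSum (condSet p r X c ξ) (momentSum k) := by
  ext α
  rw [Fexp, finsum_mem_prod_fexp X (c + 1) fun v hv => hv.1]
  simp_rw [posRes_comp_mem_XiSet_iff hp]
  congr 1
  ext x
  simp only [mem_filter, Fintype.mem_piFinset, mem_condSet, mem_classSet, forall_and, and_assoc]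

theorem Ftilde_eq_trigSum (hp : 0 < p) (X : ℝ) (η : ℤ) :
    Ftilde k p r X η = trigSum (avoidingSet p r X 0 0 η) (momentSum k) := by
  ext α
  have hη (y : ℤ) : posRes ((p : ℤ) ^ 1) y ≡ η [ZMOD p] ↔ y ≡ η [ZMOD p] := by
    have h := posRes_modEq (p : ℤ) y
    rw [pow_one]
    exact ⟨h.symm.trans, h.trans⟩
  rw [Ftilde, finsum_mem_prod_fexp X 1 fun v hv => hv.1.1]
  congr 1
  ext x
  have hmem := posRes_comp_mem_XiSet_iff (c := 0) hp 0 x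
  simp only [zero_add] at hmem
  simp only [XiTilde, mem_filter, Fintype.mem_piFinset, Set.mem_ofPred_eq, hmem, mem_avoidingSet,
    mem_condSet, mem_classSet, forall_and, and_assoc, Function.comp_apply, hη, zero_add]

end ConditionedSums

section Congruencing

variable {k p r t : ℕ}

theorem sum_sub_pow_eq_of_momentSum_eq {ι : Type*} [Fintype ι] {x y : ι → ℤ}
    (h : momentSum k x = momentSum k y) (η : ℤ) {j : ℕ} (hj : j ≤ k) :
    ∑ i, (x i - η) ^ j = ∑ i, (y i - η) ^ j := by
  simp_rw [sub_eq_add_neg, add_pow]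
  rw [sum_comm, sum_comm (s := univ)]
  refine sum_congr rfl fun l hl => ?_
  simp_rw [← sum_mul]
  congr 2
  obtain rfl | hl' := Nat.eq_zero_or_pos l
  · simp
  · exact momentSum_eq_iff.1 h l (mem_Icc.2 ⟨hl', by have := mem_range.1 hl; omega⟩)

theorem momentSum_sumElim {ι κ : Type*} [Fintype ι] [Fintype κ] (x : ι → ℤ) (w : κ → ℤ) :
    momentSum k (Sum.elim x w) = momentSum k x + momentSum k w := by
  simp [momentSum, Fintype.sum_sum_type]

theorem sum_sub_pow_modEq_of_momentSum_add_eq {ι κ : Type*} [Fintype ι] [Fintype κ] {q η : ℤ}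
    {x y : ι → ℤ} {w w' : κ → ℤ} (hw : ∀ l, w l ≡ η [ZMOD q]) (hw' : ∀ l, w' l ≡ η [ZMOD q])
    (h : momentSum k x + momentSum k w = momentSum k y + momentSum k w') {j : ℕ} (hj : j ≤ k) :
    ∑ i, (x i - η) ^ j ≡ ∑ i, (y i - η) ^ j [ZMOD q ^ j] := by
  have hpow := sum_sub_pow_eq_of_momentSum_eq
    ((momentSum_sumElim x w).trans (h.trans (momentSum_sumElim y w').symm)) η hj
  simp only [Fintype.sum_sum_type, Sum.elim_inl, Sum.elim_inr] at hpow
  have hdvd {v : κ → ℤ} (hv : ∀ l, v l ≡ η [ZMOD q]) : q ^ j ∣ ∑ l, (v l - η) ^ j :=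
    dvd_sum fun l _ => pow_dvd_pow_of_dvd (hv l).symm.dvd j
  rw [Int.modEq_iff_dvd, show ∑ i, (y i - η) ^ j - ∑ i, (x i - η) ^ j =
    ∑ l, (w l - η) ^ j - ∑ l, (w' l - η) ^ j by linear_combination -hpow]
  exact dvd_sub (hdvd hw) (hdvd hw')

theorem norm_Fexp_pow (hp : 0 < p) (X : ℝ) (c n : ℕ) (ξ : ℤ) (α : Fin k → ℝ) :
    ‖Fexp k p r X c ξ α‖ ^ (2 * n) =
      ‖trigSum (Fintype.piFinset fun _ : Fin n => condSet p r X c ξ)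
        (fun w => ∑ l, momentSum k (w l)) α‖ ^ 2 := by
  rw [Fexp_eq_trigSum hp, mul_comm, pow_mul, ← norm_pow, trigSum_pow]

theorem prod_norm_fexp_sq (X : ℝ) (c : ℕ) (v : Fin r → ℤ) (α : Fin k → ℝ) :
    ∏ i, ‖fexp k p X c (v i) α‖ ^ 2 =
      ‖trigSum (Fintype.piFinset fun i => classSet p X c (v i)) (momentSum k) α‖ ^ 2 := by
  simp only [fexp_eq_trigSum, prod_pow, ← norm_prod, prod_trigSum]
  rfl

theorem sum_sub_pow_modEq_of_mem_condSet {X : ℝ} {b : ℕ} {η : ℤ} {x y : Fin r → ℤ}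
    {w w' : Fin t → Fin r → ℤ} (hw : ∀ l, w l ∈ condSet p r X b η)
    (hw' : ∀ l, w' l ∈ condSet p r X b η)
    (h : momentSum k x + ∑ l, momentSum k (w l) = momentSum k y + ∑ l, momentSum k (w' l))
    {j : ℕ} (hj : j ≤ k) :
    ∑ i, (x i - η) ^ j ≡ ∑ i, (y i - η) ^ j [ZMOD p ^ (j * b)] := by
  have hflat (v : Fin t → Fin r → ℤ) :
      ∑ l, momentSum k (v l) = momentSum k fun z : Fin t × Fin r => v z.1 z.2 := by
    simp only [momentSum, Fintype.sum_prod_type]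
  have hcong {v : Fin t → Fin r → ℤ} (hv : ∀ l, v l ∈ condSet p r X b η) (z : Fin t × Fin r) :
      v z.1 z.2 ≡ η [ZMOD p ^ b] := (mem_classSet.1 ((mem_condSet.1 (hv z.1)).1 z.2)).2
  rw [hflat, hflat] at h
  rw [mul_comm, pow_mul]
  exact sum_sub_pow_modEq_of_momentSum_add_eq (hcong hw) (hcong hw') h hj

theorem card_image_emod_pow_le_of_subset_avoidingSet {a b : ℕ} (hp : p.Prime) (hpk : k < p)
    (hr : 1 ≤ r) (hrk : r ≤ k) (ht : 1 ≤ t) (htk : t ≤ k) (hab : a < b)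
    (hba : (k - t - 1) * a ≤ b) {X : ℝ} {ξ η : ℤ} {S : Finset (Fin r → ℤ)}
    (hS : S ⊆ avoidingSet p r X a ξ η)
    (hpow : ∀ x ∈ S, ∀ y ∈ S, ∀ j ∈ Icc 1 k,
      ∑ i, (x i - η) ^ j ≡ ∑ i, (y i - η) ^ j [ZMOD p ^ (j * b)]) :
    #(S.image fun x i => x i % (p : ℤ) ^ (t * b)) ≤ p ^ congruencingExponent k r t a b * r ^ r := by
  have hcond (x) (hx : x ∈ S) := mem_condSet.1 (mem_avoidingSet.1 (hS hx)).1
  exact card_image_emod_pow_le_congruencingExponent hp hpk hr hrk ht htk hab hba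
    (fun x hx i => (mem_classSet.1 ((hcond x hx).1 i)).2) (fun x hx => (hcond x hx).2)
    (fun x hx => (mem_avoidingSet.1 (hS hx)).2) hpow

theorem filter_emod_eq_subset_piFinset_classSet {a : ℕ} {X : ℝ} {ξ η : ℤ} (n : ℕ)
    (c : Fin r → ℤ) :
    {x ∈ avoidingSet p r X a ξ η | (fun i => x i % (p : ℤ) ^ n) = c} ⊆
      Fintype.piFinset fun i => classSet p X n (c i) := by
  intro x hx
  obtain ⟨hx, hc⟩ := mem_filter.1 hx
  have hclass := (mem_condSet.1 (mem_avoidingSet.1 hx).1).1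
  refine Fintype.mem_piFinset.2 fun i => mem_classSet.2 ⟨(mem_classSet.1 (hclass i)).1, ?_⟩
  rw [← hc]
  exact (Int.mod_modEq (x i) _).symm

theorem integral_avoidingSet_le_sum_class {a b : ℕ} (hp : p.Prime) (hpk : k < p) (hr : 1 ≤ r)
    (hrk : r ≤ k) (ht : 1 ≤ t) (htk : t ≤ k) (hab : a < b) (hba : (k - t - 1) * a ≤ b) (X : ℝ)
    (ξ η : ℤ) :
    ∫ α in box k, ‖trigSum (avoidingSet p r X a ξ η) (momentSum k) α‖ ^ 2 *
        ‖Fexp k p r X b η α‖ ^ (2 * t) ≤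
      (p ^ congruencingExponent k r t a b * r ^ r : ℕ) *
        ∑ c ∈ (avoidingSet p r X a ξ η).image fun x i => x i % (p : ℤ) ^ (t * b),
          ∫ α in box k,
            (∏ i, ‖fexp k p X (t * b) (c i) α‖ ^ 2) * ‖Fexp k p r X b η α‖ ^ (2 * t) := by
  simp_rw [norm_Fexp_pow hp.pos, prod_norm_fexp_sq]
  refine (integral_norm_sq_mul_trigSum_le_of_card_image_le _ _ _ _
    (fun x i => x i % (p : ℤ) ^ (t * b))
    (fun x (j : Fin k) => (∑ i, (x i - η) ^ ((j : ℕ) + 1)) % (p : ℤ) ^ (((j : ℕ) + 1) * b))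
    (fun x _ y _ w hw w' hw' h => funext fun j => ?_)
    (fun d => card_image_emod_pow_le_of_subset_avoidingSet hp hpk hr hrk ht htk hab hba
      (filter_subset _ _) fun x hx y hy j hj => ?_)).trans ?_
  · exact sum_sub_pow_modEq_of_mem_condSet (Fintype.mem_piFinset.1 hw)
      (Fintype.mem_piFinset.1 hw') h j.2
  · obtain ⟨h1, h2⟩ := mem_Icc.1 hj
    obtain ⟨j, rfl⟩ := Nat.exists_eq_add_of_le' h1
    exact congrFun ((mem_filter.1 hx).2.trans (mem_filter.1 hy).2.symm) ⟨j, h2⟩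
  · simp_rw [norm_sq_mul_trigSum]
    refine mul_le_mul_of_nonneg_left (sum_le_sum fun c _ => ?_) (Nat.cast_nonneg _)
    exact integral_norm_sq_trigSum_mono
      (product_subset_product_left (filter_emod_eq_subset_piFinset_classSet _ c)) _

theorem sum_integral_prod_mul_le {Ω ι : Type*} [MeasurableSpace Ω] {μ : Measure Ω} (hr : 1 ≤ r)
    {Z : Finset ι} {S : Finset (Fin r → ι)} (hS : S ⊆ Fintype.piFinset fun _ => Z)
    {g : ι → Ω → ℝ} {G : Ω → ℝ} (hg : ∀ z α, 0 ≤ g z α) (hG : ∀ α, 0 ≤ G α)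
    (hint : ∀ c : Fin r → ι, Integrable (fun α => (∏ i, g (c i) α) * G α) μ) {B : ℝ}
    (hB : ∀ z ∈ Z, ∫ α, g z α ^ r * G α ∂μ ≤ B) :
    ∑ c ∈ S, ∫ α, (∏ i, g (c i) α) * G α ∂μ ≤ (#Z : ℝ) ^ r * B := by
  have hint' (z : ι) : Integrable (fun α => g z α ^ r * G α) μ := by
    simpa using hint fun _ => z
  have hpoint (α : Ω) :
      ∑ c ∈ S, (∏ i, g (c i) α) * G α ≤ (#Z : ℝ) ^ (r - 1) * ∑ z ∈ Z, g z α ^ r * G α := by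
    rw [← sum_mul, ← sum_mul, ← mul_assoc]
    refine mul_le_mul_of_nonneg_right ?_ (hG α)
    calc ∑ c ∈ S, ∏ i, g (c i) α
        ≤ ∑ c ∈ Fintype.piFinset fun _ : Fin r => Z, ∏ i, g (c i) α :=
          sum_le_sum_of_subset_of_nonneg hS fun c _ _ => prod_nonneg fun i _ => hg _ _
      _ = (∑ z ∈ Z, g z α) ^ r := by
          rw [← prod_univ_sum (fun _ => Z) fun _ z => g z α, prod_const, card_univ,
            Fintype.card_fin]
      _ ≤ (#Z : ℝ) ^ (r - 1) * ∑ z ∈ Z, g z α ^ r := by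
          simpa only [Nat.sub_add_cancel hr] using
            pow_sum_le_card_mul_sum_pow (s := Z) (fun z _ => hg z α) (r - 1)
  calc ∑ c ∈ S, ∫ α, (∏ i, g (c i) α) * G α ∂μ
      = ∫ α, ∑ c ∈ S, (∏ i, g (c i) α) * G α ∂μ :=
        (integral_finsetSum _ fun c _ => hint c).symm
    _ ≤ ∫ α, (#Z : ℝ) ^ (r - 1) * ∑ z ∈ Z, g z α ^ r * G α ∂μ :=
        integral_mono (integrable_finsetSum _ fun c _ => hint c)
          ((integrable_finsetSum _ fun z _ => hint' z).const_mul _) hpoint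
    _ = (#Z : ℝ) ^ (r - 1) * ∑ z ∈ Z, ∫ α, g z α ^ r * G α ∂μ := by
        rw [integral_const_mul, integral_finsetSum _ fun z _ => hint' z]
    _ ≤ (#Z : ℝ) ^ (r - 1) * (#Z * B) := by
        gcongr
        exact (sum_le_card_nsmul Z _ B hB).trans_eq (nsmul_eq_mul _ _)
    _ = (#Z : ℝ) ^ r * B := by rw [← mul_assoc, ← pow_succ, Nat.sub_add_cancel hr]

theorem continuous_fexp (k p : ℕ) (X : ℝ) (c : ℕ) (ξ : ℤ) : Continuous (fexp k p X c ξ) := by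
  rw [fexp_eq_trigSum]
  exact continuous_trigSum _ _

theorem continuous_Fexp (hp : 0 < p) (X : ℝ) (c : ℕ) (ξ : ℤ) :
    Continuous (Fexp k p r X c ξ) := by
  rw [Fexp_eq_trigSum hp]
  exact continuous_trigSum _ _

theorem card_filter_Ico_pow_modEq {a c : ℕ} (hp : 0 < p) (hac : a ≤ c) (ξ : ℤ) :
    #{z ∈ Ico (0 : ℤ) (p ^ c) | z ≡ ξ [ZMOD p ^ a]} = p ^ (c - a) := by
  rw [← card_filter_Ico_modEq (d := (p : ℤ) ^ a) (by positivity) (p ^ (c - a)) ξ]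
  push_cast
  rw [← pow_add, Nat.add_sub_cancel' hac]

theorem image_emod_avoidingSet_subset {a c : ℕ} (hp : 0 < p) (hac : a ≤ c) (hc : c ≠ 0) (X : ℝ)
    (ξ η : ℤ) :
    (avoidingSet p r X a ξ η).image (fun x i => x i % (p : ℤ) ^ c) ⊆
      Fintype.piFinset fun _ =>
        {z ∈ {z ∈ Ico (0 : ℤ) (p ^ c) | z ≡ ξ [ZMOD p ^ a]} | ¬ z ≡ η [ZMOD p]} := by
  rw [image_subset_iff]
  intro x hx
  obtain ⟨hxcond, hxη⟩ := mem_avoidingSet.1 hx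
  have hq : (0 : ℤ) < (p : ℤ) ^ c := by positivity
  have hmod (i : Fin r) {d : ℤ} (hd : d ∣ (p : ℤ) ^ c) : x i % (p : ℤ) ^ c ≡ x i [ZMOD d] :=
    (Int.mod_modEq _ _).of_dvd hd
  simp only [Fintype.mem_piFinset, mem_filter, mem_Ico]
  exact fun i => ⟨⟨⟨Int.emod_nonneg _ hq.ne', Int.emod_lt_of_pos _ hq⟩,
    (hmod i (pow_dvd_pow _ hac)).trans (mem_classSet.1 ((mem_condSet.1 hxcond).1 i)).2⟩,
    fun h => hxη i ((hmod i (dvd_pow_self _ hc)).symm.trans h)⟩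

theorem integral_avoidingSet_le {a b : ℕ} (hp : p.Prime) (hpk : k < p) (hr : 1 ≤ r) (hrk : r ≤ k)
    (ht : 1 ≤ t) (htk : t ≤ k) (hab : a < b) (hba : (k - t - 1) * a ≤ b) {X : ℝ} (ξ : ℤ) {η : ℤ}
    {B : ℝ} (hB0 : 0 ≤ B)
    (hB : ∀ z : ℤ, ¬ z ≡ η [ZMOD p] → ∫ α in box k,
      ‖fexp k p X (t * b) z α‖ ^ (2 * r) * ‖Fexp k p r X b η α‖ ^ (2 * t) ≤ B) :
    ∫ α in box k, ‖trigSum (avoidingSet p r X a ξ η) (momentSum k) α‖ ^ 2 *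
        ‖Fexp k p r X b η α‖ ^ (2 * t) ≤
      (p ^ congruencingExponent k r t a b * r ^ r : ℕ) * (((p : ℝ) ^ (t * b - a)) ^ r * B) := by
  have hatb : a ≤ t * b := hab.le.trans (Nat.le_mul_of_pos_left b ht)
  have htb : t * b ≠ 0 := (Nat.mul_pos ht (Nat.zero_lt_of_lt hab)).ne'
  refine (integral_avoidingSet_le_sum_class hp hpk hr hrk ht htk hab hba X ξ η).trans ?_
  gcongr
  refine (sum_integral_prod_mul_le hr (image_emod_avoidingSet_subset hp.pos hatb htb X ξ η)
    (B := B)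
    (g := fun z α => ‖fexp k p X (t * b) z α‖ ^ 2) (fun _ _ => by positivity)
    (fun _ => by positivity) (fun c => integrableOn_box ?_) fun z hz => ?_).trans ?_
  · exact (continuous_finsetProd _ fun i _ => (continuous_fexp _ _ _ _ _).norm.pow 2).mul
      ((continuous_Fexp hp.pos _ _ _).norm.pow _)
  · simp_rw [← pow_mul]
    exact hB z (mem_filter.1 hz).2
  · gcongr
    exact_mod_cast (card_filter_le _ _).trans_eq (card_filter_Ico_pow_modEq hp.pos hatb ξ)

end Congruencing

section Holder

theorem integral_rpow_mul_rpow_le {Ω : Type*} [MeasurableSpace Ω] {μ : Measure Ω} {u v : Ω → ℝ}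
    (hu : Integrable u μ) (hv : Integrable v μ) (hu₀ : 0 ≤ u) (hv₀ : 0 ≤ v) {p q : ℝ}
    (hp : 0 ≤ p) (hq : 0 ≤ q) (hpq : p + q = 1) :
    ∫ x, u x ^ p * v x ^ q ∂μ ≤ (∫ x, u x ∂μ) ^ p * (∫ x, v x ∂μ) ^ q := by
  have hnonneg (x : Ω) : 0 ≤ u x ^ p * v x ^ q :=
    mul_nonneg (Real.rpow_nonneg (hu₀ x) p) (Real.rpow_nonneg (hv₀ x) q)
  have hIu : 0 ≤ ∫ x, u x ∂μ := integral_nonneg hu₀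
  have hIv : 0 ≤ ∫ x, v x ∂μ := integral_nonneg hv₀
  rw [integral_eq_lintegral_of_nonneg_ae (.of_forall hnonneg)
    ((hu.aemeasurable.pow_const p).mul (hv.aemeasurable.pow_const q)).aestronglyMeasurable]
  refine ENNReal.toReal_le_of_le_ofReal (by positivity) ?_
  rw [ENNReal.ofReal_mul (by positivity), ← ENNReal.ofReal_rpow_of_nonneg hIu hp,
    ← ENNReal.ofReal_rpow_of_nonneg hIv hq, ofReal_integral_eq_lintegral_ofReal hu (.of_forall hu₀),
    ofReal_integral_eq_lintegral_ofReal hv (.of_forall hv₀)]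
  simp_rw [ENNReal.ofReal_mul (Real.rpow_nonneg (hu₀ _) p),
    ← ENNReal.ofReal_rpow_of_nonneg (hu₀ _) hp, ← ENNReal.ofReal_rpow_of_nonneg (hv₀ _) hq]
  exact ENNReal.lintegral_mul_norm_pow_le hu.aemeasurable.ennreal_ofReal
    hv.aemeasurable.ennreal_ofReal hp hq hpq

theorem pow_mul_pow_eq_rpow_mul_rpow {x y : ℝ} (hx : 0 ≤ x) (hy : 0 ≤ y) (r : ℕ) {t : ℕ}
    (ht : 1 ≤ t) :
    x ^ (2 * r) * y ^ (2 * t) = (y ^ 2 * x ^ (2 * (r * t))) ^ (1 / (t : ℝ)) *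
      (y ^ (2 * (t + 1))) ^ (1 - 1 / (t : ℝ)) := by
  have ht₁ : (1 : ℝ) ≤ t := by exact_mod_cast ht
  have hle : 1 / (t : ℝ) ≤ 1 := (div_le_one (by positivity)).2 ht₁
  simp only [← Real.rpow_natCast]
  rw [Real.mul_rpow (by positivity) (by positivity), ← Real.rpow_mul hx, ← Real.rpow_mul hy,
    ← Real.rpow_mul hy, mul_right_comm, ← Real.rpow_add_of_nonneg hy (by positivity)
      (mul_nonneg (by positivity) (by linarith)), mul_comm]
  congr 2
  · push_cast
    field_simp
    ring
  · push_cast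
    field_simp

theorem integral_pow_mul_pow_le {Ω : Type*} [MeasurableSpace Ω] {μ : Measure Ω} {f F : Ω → ℝ}
    {r t : ℕ} (ht : 1 ≤ t) (hf : 0 ≤ f) (hF : 0 ≤ F)
    (hint : Integrable (fun x => F x ^ 2 * f x ^ (2 * (r * t))) μ)
    (hint' : Integrable (fun x => F x ^ (2 * (t + 1))) μ) :
    ∫ x, f x ^ (2 * r) * F x ^ (2 * t) ∂μ ≤
      (∫ x, F x ^ 2 * f x ^ (2 * (r * t)) ∂μ) ^ (1 / (t : ℝ)) *
        (∫ x, F x ^ (2 * (t + 1)) ∂μ) ^ (1 - 1 / (t : ℝ)) := by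
  have hle : 1 / (t : ℝ) ≤ 1 := (div_le_one (by positivity)).2 (by exact_mod_cast ht)
  simp_rw [pow_mul_pow_eq_rpow_mul_rpow (hf _) (hF _) r ht]
  exact integral_rpow_mul_rpow_le hint hint'
    (fun x => mul_nonneg (pow_nonneg (hF x) _) (pow_nonneg (hf x) _))
    (fun x => pow_nonneg (hF x) _) (by positivity) (sub_nonneg.2 hle) (add_sub_cancel _ _)

end Holder

section MeanValues

variable {k p r : ℕ}

theorem Iab_le_Imax {s : ℕ} {X : ℝ} {a b : ℕ} {ξ η : ℤ} (hξ : ξ ∈ Set.Icc 1 ((p : ℤ) ^ a))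
    (hη : η ∈ Set.Icc 1 ((p : ℤ) ^ b)) (h : ¬ η ≡ ξ [ZMOD p]) :
    Iab k p r s X a b ξ η ≤ Imax k p r s X a b := by
  refine le_csSup (Set.Finite.bddAbove ?_) ⟨ξ, η, hξ.1, hξ.2, hη.1, hη.2, h, rfl⟩
  refine ((Set.finite_Icc 1 ((p : ℤ) ^ a)).image2 (Iab k p r s X a b)
    (Set.finite_Icc 1 ((p : ℤ) ^ b))).subset ?_
  rintro _ ⟨x, y, hx, hx', hy, hy', -, rfl⟩
  exact ⟨x, ⟨hx, hx'⟩, y, ⟨hy, hy'⟩, rfl⟩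

theorem Imax_nonneg (k p r s : ℕ) (X : ℝ) (a b : ℕ) : 0 ≤ Imax k p r s X a b := by
  refine Real.sSup_nonneg ?_
  rintro _ ⟨x, y, -, -, -, -, -, rfl⟩
  exact integral_nonneg fun α => by positivity

theorem Iab_le_Imax_of_not_modEq {s : ℕ} (hp : 0 < p) {X : ℝ} {b c : ℕ} (hc : c ≠ 0) {η z : ℤ}
    (hη : η ∈ Set.Icc 1 ((p : ℤ) ^ b)) (h : ¬ z ≡ η [ZMOD p]) :
    Iab k p r s X b c η z ≤ Imax k p r s X b c := by
  have hz := posRes_modEq ((p : ℤ) ^ c) z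
  rw [Iab, ← fexp_congr hz]
  exact Iab_le_Imax hη (posRes_mem_Icc (by positivity) z)
    fun hmod => h ((hz.of_dvd (dvd_pow_self _ hc)).symm.trans hmod)

theorem integral_norm_trigSum_pow {ι : Type*} (S : Finset ι) (P : ι → Fin k → ℤ) (n : ℕ) :
    ∫ α in box k, ‖trigSum S P α‖ ^ (2 * n) =
      #{z ∈ (Fintype.piFinset fun _ : Fin n => S) ×ˢ Fintype.piFinset fun _ : Fin n => S |
        ∑ i, P (z.1 i) = ∑ i, P (z.2 i)} := by
  rw [← integral_norm_sq_trigSum _ fun x : Fin n → ι => ∑ i, P (x i)]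
  simp_rw [← trigSum_pow, norm_pow, ← pow_mul, mul_comm]

theorem integral_norm_trigSum_pow_mono {ι : Type*} {S T : Finset ι} (hST : S ⊆ T)
    (P : ι → Fin k → ℤ) (n : ℕ) :
    ∫ α in box k, ‖trigSum S P α‖ ^ (2 * n) ≤ ∫ α in box k, ‖trigSum T P α‖ ^ (2 * n) := by
  rw [integral_norm_trigSum_pow, integral_norm_trigSum_pow, Nat.cast_le]
  have hpi := Fintype.piFinset_subset _ _ fun _ : Fin n => hST
  exact card_le_card (filter_subset_filter _ (product_subset_product hpi hpi))

theorem integral_norm_Fexp_pow_le (hp : 0 < p) (X : ℝ) (b : ℕ) (η : ℤ) (n : ℕ) :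
    ∫ α in box k, ‖Fexp k p r X b η α‖ ^ (2 * n) ≤
      ∫ α in box k, ‖fexp k p X b η α‖ ^ (2 * (r * n)) := by
  have hf (α : Fin k → ℝ) : ‖fexp k p X b η α‖ ^ (2 * (r * n)) =
      ‖trigSum (Fintype.piFinset fun _ : Fin r => classSet p X b η) (momentSum k) α‖ ^ (2 * n) := by
    rw [fexp_eq_trigSum, mul_left_comm, pow_mul, ← norm_pow, trigSum_pow]
    rfl
  simp_rw [hf, Fexp_eq_trigSum hp]
  exact integral_norm_trigSum_pow_mono (filter_subset _ _) _ n

theorem integral_norm_trigSum_momentCurve_affine_le (S : Finset ℤ) {q : ℤ} (hq : q ≠ 0) (η : ℤ)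
    (n : ℕ) :
    ∫ α in box k, ‖trigSum S (fun y => momentCurve k (η + q * y)) α‖ ^ (2 * n) ≤
      ∫ α in box k, ‖trigSum S (momentCurve k) α‖ ^ (2 * n) := by
  rw [integral_norm_trigSum_pow, integral_norm_trigSum_pow, Nat.cast_le]
  refine card_le_card (monotone_filter_right _ fun z _ hz => momentSum_eq_iff.2 fun j hj => ?_)
  have hpow := sum_sub_pow_eq_of_momentSum_eq (x := fun i => η + q * z.1 i)
    (y := fun i => η + q * z.2 i) hz η (mem_Icc.1 hj).2
  simp only [add_sub_cancel_left, mul_pow, ← mul_sum] at hpow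
  exact mul_left_cancel₀ (pow_ne_zero j hq) hpow

theorem classSet_subset_image (hp : 0 < p) (X : ℝ) {b : ℕ} {η : ℤ}
    (hη : η ∈ Set.Icc 1 ((p : ℤ) ^ b)) :
    classSet p X b η ⊆
      (Icc 0 ⌊X / (p : ℝ) ^ b⌋).image fun y => η + (p : ℤ) ^ b * y := by
  intro x hx
  obtain ⟨hx, hmod⟩ := mem_classSet.1 hx
  obtain ⟨hx₁, hxX⟩ := mem_Icc.1 hx
  obtain ⟨y, hy⟩ := hmod.symm.dvd
  obtain ⟨hη₁, hηq⟩ := hη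
  have hq : (0 : ℤ) < (p : ℤ) ^ b := by positivity
  refine mem_image.2 ⟨y, mem_Icc.2 ⟨?_, ?_⟩, by linarith⟩
  · by_contra! hneg
    nlinarith [hq]
  · have hle : (y : ℝ) * (p : ℝ) ^ b ≤ x := by exact_mod_cast (by linarith : y * (p : ℤ) ^ b ≤ x)
    rw [Int.le_floor, le_div_iff₀ (by positivity)]
    exact hle.trans (Int.le_floor.1 hxX)

theorem integral_norm_fexp_pow_le (hp : 0 < p) (X : ℝ) {b : ℕ} {η : ℤ}
    (hη : η ∈ Set.Icc 1 ((p : ℤ) ^ b)) (n : ℕ) :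
    ∫ α in box k, ‖fexp k p X b η α‖ ^ (2 * n) ≤
      ∫ α in box k, ‖trigSum (Icc 0 ⌊X / (p : ℝ) ^ b⌋) (momentCurve k) α‖ ^ (2 * n) := by
  have hq : (p : ℤ) ^ b ≠ 0 := by positivity
  have hinj : Function.Injective fun y : ℤ => η + (p : ℤ) ^ b * y :=
    (add_right_injective η).comp (mul_right_injective₀ hq)
  have himage (S : Finset ℤ) (α : Fin k → ℝ) :
      trigSum (S.image fun y => η + (p : ℤ) ^ b * y) (momentCurve k) α =
        trigSum S (fun y => momentCurve k (η + (p : ℤ) ^ b * y)) α := sum_image hinj.injOn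
  rw [fexp_eq_trigSum]
  refine (integral_norm_trigSum_pow_mono (classSet_subset_image hp X hη) _ n).trans ?_
  simp_rw [himage]
  exact integral_norm_trigSum_momentCurve_affine_le _ hq η n

theorem Jcount_eq_card (n k : ℕ) (Y : ℝ) :
    Jcount n k Y = #{z ∈ (Fintype.piFinset fun _ : Fin n => Icc 1 ⌊Y⌋) ×ˢ
      Fintype.piFinset fun _ : Fin n => Icc 1 ⌊Y⌋ | momentSum k z.1 = momentSum k z.2} := by
  rw [Jcount, ← Set.ncard_coe_finset]
  congr 1
  ext z
  simp only [Set.mem_ofPred_eq, coe_filter, mem_product, Fintype.mem_piFinset, mem_Icc,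
    Int.le_floor, momentSum_eq_iff, sum_sub_distrib, sub_eq_zero, and_assoc]

theorem integral_norm_trigSum_Icc_one_pow (n k : ℕ) (Y : ℝ) :
    ∫ α in box k, ‖trigSum (Icc 1 ⌊Y⌋) (momentCurve k) α‖ ^ (2 * n) = Jcount n k Y := by
  rw [integral_norm_trigSum_pow, Jcount_eq_card]
  rfl

theorem Jcount_mono (n k : ℕ) : Monotone (Jcount n k) := by
  intro X Y hXY
  have hpi := Fintype.piFinset_subset _ _ fun _ : Fin n =>
    Icc_subset_Icc_right (a := (1 : ℤ)) (Int.floor_mono hXY)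
  rw [Jcount_eq_card, Jcount_eq_card]
  exact card_le_card (filter_subset_filter _ (product_subset_product hpi hpi))

theorem one_le_Jcount (n k : ℕ) {Y : ℝ} (hY : 1 ≤ Y) : 1 ≤ Jcount n k Y := by
  rw [Jcount_eq_card, Nat.one_le_iff_ne_zero, card_ne_zero]
  refine ⟨(fun _ => 1, fun _ => 1), ?_⟩
  simp [Int.le_floor, hY]

theorem integral_box_one (k : ℕ) : ∫ _ in box k, (1 : ℝ) = 1 := by
  rw [volume_restrict_box]
  simp [Measure.real, Measure.pi_univ]

theorem norm_trigSum_Icc_zero_pow_le {L : ℤ} (hL : 0 ≤ L) (n : ℕ) (α : Fin k → ℝ) :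
    ‖trigSum (Icc 0 L) (momentCurve k) α‖ ^ n ≤
      2 ^ n * (1 + ‖trigSum (Icc 1 L) (momentCurve k) α‖ ^ n) := by
  have hsplit : trigSum (Icc 0 L) (momentCurve k) α =
      character (momentCurve k 0) α + trigSum (Icc 1 L) (momentCurve k) α := by
    rw [trigSum, ← insert_Icc_add_one_left_eq_Icc hL, sum_insert (by simp), zero_add, trigSum]
  have hle : ‖trigSum (Icc 0 L) (momentCurve k) α‖ ≤
      1 + ‖trigSum (Icc 1 L) (momentCurve k) α‖ := by
    rw [hsplit]
    exact (norm_add_le _ _).trans_eq (by rw [norm_character])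
  calc ‖trigSum (Icc 0 L) (momentCurve k) α‖ ^ n
      ≤ (1 + ‖trigSum (Icc 1 L) (momentCurve k) α‖) ^ n := by gcongr
    _ ≤ 2 ^ (n - 1) * (1 ^ n + ‖trigSum (Icc 1 L) (momentCurve k) α‖ ^ n) :=
        add_pow_le zero_le_one (norm_nonneg _) n
    _ ≤ 2 ^ n * (1 + ‖trigSum (Icc 1 L) (momentCurve k) α‖ ^ n) := by
        rw [one_pow]
        gcongr
        · exact one_le_two
        · exact Nat.sub_le n 1

theorem integral_norm_trigSum_Icc_zero_pow_le (n k : ℕ) {Y : ℝ} (hY : 0 ≤ Y) :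
    ∫ α in box k, ‖trigSum (Icc 0 ⌊Y⌋) (momentCurve k) α‖ ^ (2 * n) ≤
      2 ^ (2 * n) * (1 + Jcount n k Y) := by
  have hint (S : Finset ℤ) :
      IntegrableOn (fun α => ‖trigSum S (momentCurve k) α‖ ^ (2 * n)) (box k) :=
    integrableOn_box ((continuous_trigSum _ _).norm.pow _)
  have hone : IntegrableOn (fun _ : Fin k → ℝ => (1 : ℝ)) (box k) :=
    integrableOn_box continuous_const
  refine (integral_mono (hint _) ((hone.add (hint _)).const_mul _)
    fun α => norm_trigSum_Icc_zero_pow_le (Int.floor_nonneg.2 hY) (2 * n) α).trans_eq ?_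
  rw [integral_const_mul, integral_add' hone (hint _), integral_box_one,
    integral_norm_trigSum_Icc_one_pow]

theorem integral_norm_Fexp_pow_le_Jcount {b : ℕ} (hp : 0 < p) {X Y : ℝ} (hX : 0 ≤ X) {η : ℤ}
    (hη : η ∈ Set.Icc 1 ((p : ℤ) ^ b)) (n : ℕ) (hY : 1 ≤ Y) (hXY : X / (p : ℝ) ^ b ≤ Y) :
    ∫ α in box k, ‖Fexp k p r X b η α‖ ^ (2 * n) ≤
      2 ^ (2 * (r * n) + 1) * Jcount (r * n) k Y := by
  have hJ : (1 : ℝ) ≤ Jcount (r * n) k Y := by exact_mod_cast one_le_Jcount (r * n) k hY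
  have hmono : (Jcount (r * n) k (X / (p : ℝ) ^ b) : ℝ) ≤ Jcount (r * n) k Y := by
    exact_mod_cast Jcount_mono (r * n) k hXY
  calc ∫ α in box k, ‖Fexp k p r X b η α‖ ^ (2 * n)
      ≤ ∫ α in box k, ‖fexp k p X b η α‖ ^ (2 * (r * n)) := integral_norm_Fexp_pow_le hp X b η n
    _ ≤ ∫ α in box k, ‖trigSum (Icc 0 ⌊X / (p : ℝ) ^ b⌋) (momentCurve k) α‖ ^ (2 * (r * n)) :=
        integral_norm_fexp_pow_le hp X hη _
    _ ≤ 2 ^ (2 * (r * n)) * (1 + Jcount (r * n) k (X / (p : ℝ) ^ b)) :=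
        integral_norm_trigSum_Icc_zero_pow_le _ _ (by positivity)
    _ ≤ 2 ^ (2 * (r * n) + 1) * Jcount (r * n) k Y := by
        rw [pow_succ, mul_assoc]
        gcongr
        linarith

end MeanValues

section Exponent

variable {k r t : ℕ}

theorem sum_Ico_natCast {m n : ℕ} (h : m ≤ n) :
    ∑ j ∈ Ico m n, (j : ℝ) = ((n : ℝ) * (n - 1) - m * (m - 1)) / 2 := by
  induction n, h using Nat.le_induction with
  | base => simp
  | succ n hmn ih =>
    rw [sum_Ico_succ_top hmn, ih]
    push_cast
    ring

theorem sum_Ioc_natCast_sub {m n : ℕ} (h : m ≤ n) :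
    ∑ j ∈ Ioc m n, ((n : ℝ) - j) = ((n : ℝ) - m) * (n - m - 1) / 2 := by
  rw [← Ico_add_one_add_one_eq_Ioc, sum_sub_distrib, sum_Ico_natCast (by omega), sum_const,
    Nat.card_Ico, nsmul_eq_mul, Nat.add_sub_add_right, Nat.cast_sub h]
  push_cast
  ring

theorem cast_congruencingExponent (hrk : r ≤ k) (htk : t ≤ k) (hrt : k ≤ r + t) (a b : ℕ) :
    (congruencingExponent k r t a b : ℝ) = muC k r t * b + nuC k r t * a := by
  have hμ : ((∑ j ∈ Ioc (k - r) t, (t - j) : ℕ) : ℝ) = muC k r t := by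
    rw [Nat.cast_sum, sum_congr rfl fun j hj => Nat.cast_sub (mem_Ioc.1 hj).2,
      sum_Ioc_natCast_sub (by omega), Nat.cast_sub hrk, muC]
    ring
  have hν : ((∑ h ∈ Ico (k - t) r, h : ℕ) : ℝ) = nuC k r t := by
    rw [Nat.cast_sum, sum_Ico_natCast (by omega), Nat.cast_sub htk, nuC]
    ring
  rw [congruencingExponent, ← sum_mul, ← sum_mul, Nat.cast_add, Nat.cast_mul, Nat.cast_mul, hμ, hν]

theorem congruencingExponent_mono {a a' b b' : ℕ} (ha : a ≤ a') (hb : b ≤ b') :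
    congruencingExponent k r t a b ≤ congruencingExponent k r t a' b' := by
  unfold congruencingExponent
  gcongr

theorem pow_le_two_pow_mul_rpow {p M e : ℝ} {n B : ℕ} (hp₀ : 0 ≤ p) (hp : p ≤ 2 * M)
    (hn : (n : ℝ) = e) (hB : n ≤ B) : p ^ n ≤ 2 ^ B * M ^ e := by
  have hM : 0 ≤ M := by linarith
  calc p ^ n ≤ (2 * M) ^ n := by gcongr
    _ = 2 ^ n * M ^ e := by rw [mul_pow, ← hn, Real.rpow_natCast]
    _ ≤ 2 ^ B * M ^ e := by
        gcongr
        exact one_le_two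

end Exponent

section Assembly

variable {k p r t a b : ℕ} {X M : ℝ}

theorem integral_fexp_pow_mul_Fexp_pow_le (hp : 0 < p) (ht : 1 ≤ t) (hb : b ≠ 0) (hX : 0 ≤ X)
    {Y : ℝ} (hY : 1 ≤ Y) (hXY : X / (p : ℝ) ^ b ≤ Y) {η z : ℤ}
    (hη : η ∈ Set.Icc 1 ((p : ℤ) ^ b)) (hz : ¬ z ≡ η [ZMOD p]) :
    ∫ α in box k, ‖fexp k p X (t * b) z α‖ ^ (2 * r) * ‖Fexp k p r X b η α‖ ^ (2 * t) ≤
      2 ^ (2 * (r * (t + 1)) + 1) * (Jcount (r * (t + 1)) k Y : ℝ) ^ (1 - 1 / (t : ℝ)) *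
        Imax k p r (r * t) X b (t * b) ^ (1 / (t : ℝ)) := by
  have hf := (continuous_fexp k p X (t * b) z).norm
  have hF := (continuous_Fexp (k := k) (r := r) hp X b η).norm
  have hinv : 0 ≤ 1 / (t : ℝ) := by positivity
  have hinv' : 0 ≤ 1 - 1 / (t : ℝ) :=
    sub_nonneg.2 ((div_le_one (by positivity)).2 (by exact_mod_cast ht))
  set m := 2 * (r * (t + 1)) + 1
  set J : ℝ := (Jcount (r * (t + 1)) k Y : ℝ)
  set I := Imax k p r (r * t) X b (t * b)
  have hI : ∫ α in box k, ‖Fexp k p r X b η α‖ ^ 2 * ‖fexp k p X (t * b) z α‖ ^ (2 * (r * t)) ≤ I :=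
    Iab_le_Imax_of_not_modEq hp (mul_ne_zero (Nat.one_le_iff_ne_zero.1 ht) hb) hη hz
  have hJ : ∫ α in box k, ‖Fexp k p r X b η α‖ ^ (2 * (t + 1)) ≤ 2 ^ m * J :=
    integral_norm_Fexp_pow_le_Jcount hp hX hη (t + 1) hY hXY
  have hI₀ : 0 ≤ I := Imax_nonneg ..
  calc ∫ α in box k, ‖fexp k p X (t * b) z α‖ ^ (2 * r) * ‖Fexp k p r X b η α‖ ^ (2 * t)
      ≤ (∫ α in box k, ‖Fexp k p r X b η α‖ ^ 2 * ‖fexp k p X (t * b) z α‖ ^ (2 * (r * t))) ^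
          (1 / (t : ℝ)) *
        (∫ α in box k, ‖Fexp k p r X b η α‖ ^ (2 * (t + 1))) ^ (1 - 1 / (t : ℝ)) :=
        integral_pow_mul_pow_le ht (fun _ => norm_nonneg _) (fun _ => norm_nonneg _)
          (integrableOn_box ((hF.pow _).mul (hf.pow _))) (integrableOn_box (hF.pow _))
    _ ≤ I ^ (1 / (t : ℝ)) * (2 ^ m * J) ^ (1 - 1 / (t : ℝ)) := by gcongr
    _ ≤ I ^ (1 / (t : ℝ)) * (2 ^ m * J ^ (1 - 1 / (t : ℝ))) := by
        rw [Real.mul_rpow (by positivity) (by positivity)]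
        gcongr
        exact Real.rpow_le_self_of_one_le (one_le_pow₀ one_le_two) (by linarith)
    _ = 2 ^ m * J ^ (1 - 1 / (t : ℝ)) * I ^ (1 / (t : ℝ)) := mul_comm _ _

/-- The constant in the congruencing estimate, where `B` is an upper bound for `b`. -/
def congruencingConst (k r t B : ℕ) : ℝ :=
  2 ^ congruencingExponent k r t B B * r ^ r * (2 ^ (t * B)) ^ r * 2 ^ (2 * (r * (t + 1)) + 1)

theorem congruencingConst_pos (hr : 1 ≤ r) (k t B : ℕ) : 0 < congruencingConst k r t B := by
  unfold congruencingConst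
  positivity

theorem integral_avoidingSet_le_congruencingConst {B : ℕ} (hp : p.Prime) (hpk : k < p)
    (hr : 1 ≤ r) (hrk : r ≤ k) (ht : 1 ≤ t) (htk : t ≤ k) (hrt : k ≤ r + t) (hab : a < b)
    (hba : (k - t - 1) * a ≤ b) (hbB : b ≤ B) (hX : 0 ≤ X) (hMp : M ≤ p) (hpM : (p : ℝ) ≤ 2 * M)
    (hY : 1 ≤ X / M ^ b) (ξ : ℤ) {η : ℤ} (hη : η ∈ Set.Icc 1 ((p : ℤ) ^ b)) :
    ∫ α in box k, ‖trigSum (avoidingSet p r X a ξ η) (momentSum k) α‖ ^ 2 *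
        ‖Fexp k p r X b η α‖ ^ (2 * t) ≤
      congruencingConst k r t B * M ^ (muC k r t * b + nuC k r t * a) *
        (M ^ ((t : ℝ) * b - a)) ^ r *
        (Jcount (r * (t + 1)) k (X / M ^ b) : ℝ) ^ (1 - 1 / (t : ℝ)) *
        Imax k p r (r * t) X b (t * b) ^ (1 / (t : ℝ)) := by
  have hp₀ : (0 : ℝ) < p := by exact_mod_cast hp.pos
  have hM : 0 < M := by linarith
  have hatb : a ≤ t * b := hab.le.trans (Nat.le_mul_of_pos_left b ht)
  have hI := Imax_nonneg k p r (r * t) X b (t * b)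
  set G := 2 ^ (2 * (r * (t + 1)) + 1) *
    (Jcount (r * (t + 1)) k (X / M ^ b) : ℝ) ^ (1 - 1 / (t : ℝ)) *
      Imax k p r (r * t) X b (t * b) ^ (1 / (t : ℝ)) with hG
  have hG₀ : 0 ≤ G := by positivity
  have hclasses : (p : ℝ) ^ congruencingExponent k r t a b ≤
      2 ^ congruencingExponent k r t B B * M ^ (muC k r t * b + nuC k r t * a) :=
    pow_le_two_pow_mul_rpow hp₀.le hpM (cast_congruencingExponent hrk htk hrt a b)
      (congruencingExponent_mono (hab.le.trans hbB) hbB)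
  have hlifts : (p : ℝ) ^ (t * b - a) ≤ 2 ^ (t * B) * M ^ ((t : ℝ) * b - a) :=
    pow_le_two_pow_mul_rpow hp₀.le hpM (by push_cast [Nat.cast_sub hatb]; rfl)
      ((Nat.sub_le _ _).trans (Nat.mul_le_mul_left _ hbB))
  calc ∫ α in box k, ‖trigSum (avoidingSet p r X a ξ η) (momentSum k) α‖ ^ 2 *
        ‖Fexp k p r X b η α‖ ^ (2 * t)
      ≤ (p ^ congruencingExponent k r t a b * r ^ r : ℕ) * (((p : ℝ) ^ (t * b - a)) ^ r * G) :=
        integral_avoidingSet_le hp hpk hr hrk ht htk hab hba ξ hG₀ fun z hz =>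
          integral_fexp_pow_mul_Fexp_pow_le hp.pos ht (Nat.zero_lt_of_lt hab).ne' hX hY
            (by gcongr) hη hz
    _ ≤ 2 ^ congruencingExponent k r t B B * M ^ (muC k r t * b + nuC k r t * a) * r ^ r *
          ((2 ^ (t * B) * M ^ ((t : ℝ) * b - a)) ^ r * G) := by
        push_cast
        gcongr
    _ = _ := by
        rw [hG, congruencingConst, mul_pow]
        ring

theorem Kmax_le {c : ℝ} (hp : 0 < p) (hc : 0 ≤ c)
    (h : ∀ ξ : ℤ, ∀ η ∈ Set.Icc 1 ((p : ℤ) ^ b),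
      ∫ α in box k, ‖trigSum (avoidingSet p r X a ξ η) (momentSum k) α‖ ^ 2 *
        ‖Fexp k p r X b η α‖ ^ (2 * t) ≤ c) :
    Kmax k p r t X a b ≤ c := by
  rw [Kmax]
  split_ifs with ha
  · refine Real.sSup_le ?_ hc
    rintro _ ⟨η, hη, hη', rfl⟩
    subst ha
    simpa only [Ktilde, Ftilde_eq_trigSum hp] using h 0 η ⟨hη, hη'⟩
  · refine Real.sSup_le ?_ hc
    rintro _ ⟨ξ, η, -, -, hη, hη', hmod, rfl⟩
    simpa only [Kab, Fexp_eq_trigSum hp, avoidingSet_eq_condSet ha hmod] using h ξ η ⟨hη, hη'⟩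

theorem Mval_pos (t N : ℕ) (hX : 0 < X) : 0 < Mval t N X := Real.rpow_pos_of_pos hX _

theorem one_le_div_Mval_pow (ht : 1 ≤ t) {N : ℕ} (hX : 1 ≤ X)
    (hb : (b : ℝ) ≤ (thetaC t N)⁻¹) : 1 ≤ X / Mval t N X ^ b := by
  have hX₀ : 0 < X := by linarith
  have hθ : 0 < thetaC t N := Real.rpow_pos_of_pos (by positivity) _
  rw [one_le_div (pow_pos (Mval_pos t N hX₀) b)]
  calc Mval t N X ^ b = X ^ (thetaC t N * b) := by
        rw [Mval, Real.rpow_mul hX₀.le, Real.rpow_natCast]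
    _ ≤ X := Real.rpow_le_self_of_one_le hX ((le_inv_mul_iff₀ hθ).1 (by rwa [mul_one]))

theorem tsub_mul_le_of_cast_sub_mul_le (h : ((k : ℝ) - t - 1) * a ≤ b) :
    (k - t - 1) * a ≤ b := by
  obtain hkt | hkt := Nat.le_total k (t + 1)
  · simp [Nat.sub_sub, Nat.sub_eq_zero_of_le hkt]
  · have hcast : ((k - t - 1 : ℕ) : ℝ) = (k : ℝ) - t - 1 := by
      rw [Nat.sub_sub, Nat.cast_sub hkt]
      push_cast
      ring
    rw [← hcast] at h
    exact_mod_cast h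

end Assembly

theorem lemma5_1_general (k r t : ℕ) (ht : 1 ≤ t) (htk : t ≤ k) (hr : 1 ≤ r) (hrk : r ≤ k)
    (hrt : k ≤ r + t) (N : ℕ) :
    ∃ C : ℝ, 0 < C ∧ ∀ X : ℝ, 1 ≤ X →
    ∀ p : ℕ, p.Prime → k < p → Mval t N X ≤ p → (p : ℝ) ≤ 2 * Mval t N X →
    ∀ a b : ℕ, a < b → (b : ℝ) ≤ (thetaC t N)⁻¹ → ((k : ℝ) - t - 1) * a ≤ b →
      Kmax k p r t X a b ≤
        C * Mval t N X ^ (muC k r t * b + nuC k r t * a)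
          * (Mval t N X ^ ((t : ℝ) * b - a)) ^ r
          * (Jcount (r * (t + 1)) k (X / Mval t N X ^ b) : ℝ) ^ (1 - 1 / (t : ℝ))
          * Imax k p r (r * t) X b (t * b) ^ (1 / (t : ℝ)) := by
  refine ⟨congruencingConst k r t ⌊(thetaC t N)⁻¹⌋₊, congruencingConst_pos hr _ _ _, ?_⟩
  intro X hX p hp hpk hMp hpM a b hab hb hba
  have hM := Mval_pos t N (zero_lt_one.trans_le hX)
  have hC := congruencingConst_pos hr k t ⌊(thetaC t N)⁻¹⌋₊
  have hI := Imax_nonneg k p r (r * t) X b (t * b)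
  exact Kmax_le hp.pos (by positivity) fun ξ η hη =>
    integral_avoidingSet_le_congruencingConst hp hpk hr hrk ht htk hrt hab
      (tsub_mul_le_of_cast_sub_mul_le hba) (Nat.le_floor hb) (zero_le_one.trans hX) hMp hpM
      (one_le_div_Mval_pow ht hX hb) ξ hη

/-- Lemma 5.1: for 0 ≤ a < b ≤ θ⁻¹ with b ≥ (k-t-1)a one has
K_{a,b}(X) ≤ C M^{μb+νa} (M^{tb-a})^r J_{s+r}(X/M^b)^{1-1/t} I_{b,tb}(X)^{1/t}. -/
theorem lemma5_1 (k r t : ℕ) (hk : 2 ≤ k)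
    (ht1 : max 2 (((k : ℝ) - 1) / 2) ≤ (t : ℝ)) (ht2 : t ≤ k)
    (hr1 : 1 ≤ r) (hr2 : r ≤ k) (hrt : k ≤ r + t) :
    ∃ P₀ : ℝ, ∃ N₀ : ℕ, ∀ N : ℕ, N₀ ≤ N →
    ∃ C : ℝ, 0 < C ∧ ∃ X₀ : ℝ, ∀ X : ℝ, X₀ ≤ X →
    ∀ p : ℕ, p.Prime → P₀ < (p:ℝ) → Mval t N X < (p:ℝ) → (p:ℝ) ≤ 2 * Mval t N X →
    ∀ a b : ℕ, a < b → (b:ℝ) ≤ (thetaC t N)⁻¹ → ((k:ℝ) - t - 1) * a ≤ (b:ℝ) →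
      Kmax k p r t X a b ≤
        C * Mval t N X ^ (muC k r t * b + nuC k r t * a)
          * (Mval t N X ^ ((t:ℝ)*b - a)) ^ r
          * ((Jcount (r*(t+1)) k (X / Mval t N X ^ b) : ℝ)) ^ (1 - 1/(t:ℝ))
          * (Imax k p r (r*t) X b (t*b)) ^ (1/(t:ℝ)) := by
  have ht : 1 ≤ t := one_le_two.trans (by exact_mod_cast (le_max_left _ _).trans ht1)
  refine ⟨k, 0, fun N _ => ?_⟩
  obtain ⟨C, hC, h⟩ := lemma5_1_general k r t ht ht2 hr1 hr2 hrt N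
  exact ⟨C, hC, 1, fun X hX p hp hpk hMp => h X hX p hp (by exact_mod_cast hpk) hMp.le⟩

end
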